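/- (Hodge-type div-curl estimate) Let Ω = 𝕋² × (−1,1) with boundary Γ and outward normal N, and let s ≥ 1 be an integer. For any smooth vector field X on Ω̄, ‖X‖_{H^s(Ω)} ≲ ‖X‖_{L²(Ω)} + ‖curl X‖_{H^{s-1}(Ω)} + ‖div X‖_{H^{s-1}(Ω)} + |∂̄ X · N|_{H^{s-3/2}(Γ)}, where ∂̄ denotes tangential derivatives and the implicit constant depends only on s and Ω. -/

import Mathlib

open MeasureTheory
open scoped ENNReal NNReal Classical

noncomputable section

/-- Fundamental domain of the horizontal torus `𝕋²`. -/
def Q2 : Set (Fin 2 → ℝ) := Set.univ.pi fun _ => Set.Ioo (0 : ℝ) 1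

/-- Fundamental domain of `Ω = 𝕋² × (−1, 1)` inside `ℝ³`. -/
def Q3 : Set (Fin 3 → ℝ) :=
  {y | y 0 ∈ Set.Ioo (0 : ℝ) 1 ∧ y 1 ∈ Set.Ioo (0 : ℝ) 1 ∧ y 2 ∈ Set.Ioo (-1 : ℝ) 1}

/-- The periodic (torus) distance on `𝕋²`. -/
def pdist2 (x y : Fin 2 → ℝ) : ℝ := ⨅ k : Fin 2 → ℤ, ‖x - y + fun i => (k i : ℝ)‖

/-- Horizontal lattice vector in `ℝ³`. -/
def lat3 (k : Fin 2 → ℤ) : Fin 3 → ℝ := ![(k 0 : ℝ), (k 1 : ℝ), 0]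

/-- Periodicity on `𝕋²`. -/
def Per2 {E : Type*} (f : (Fin 2 → ℝ) → E) : Prop :=
  ∀ (x : Fin 2 → ℝ) (k : Fin 2 → ℤ), f (x + fun i => (k i : ℝ)) = f x

/-- Horizontal periodicity on `Ω = 𝕋² × (−1,1)`. -/
def Per3 {E : Type*} (f : (Fin 3 → ℝ) → E) : Prop :=
  ∀ (y : Fin 3 → ℝ) (k : Fin 2 → ℤ), f (y + lat3 k) = f y

/-- Embedding of a horizontal point at height `t`. -/
def ext3 (x : Fin 2 → ℝ) (t : ℝ) : Fin 3 → ℝ := ![x 0, x 1, t]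

/-- Squared Gagliardo seminorm of fractional order `θ` on `𝕋²`. -/
def gagliardo2Sq {E : Type*} [NormedAddCommGroup E] (θ : ℝ) (f : (Fin 2 → ℝ) → E) : ℝ≥0∞ :=
  ∫⁻ x in Q2, ∫⁻ y in Q2,
    ((‖f x - f y‖₊ : ℝ≥0∞) ^ 2) / ENNReal.ofReal (pdist2 x y ^ (2 + 2 * θ))

/-- The Sobolev–Slobodeckij `H^σ(𝕋²)` norm for `σ ≥ 0`. -/
def HGamma2 (σ : ℝ) (f : (Fin 2 → ℝ) → ℝ) : ℝ≥0∞ :=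
  ((∑ k ∈ Finset.range (⌊σ⌋₊ + 1), ∫⁻ x in Q2, (‖iteratedFDeriv ℝ k f x‖₊ : ℝ≥0∞) ^ 2) +
      if σ = (⌊σ⌋₊ : ℝ) then 0
      else gagliardo2Sq (σ - ⌊σ⌋₊) (iteratedFDeriv ℝ ⌊σ⌋₊ f)) ^ (1/2 : ℝ)

/-- The `H^σ(𝕋²)` norm for arbitrary real `σ`, given for `σ < 0` by duality against
smooth periodic test functions of `H^{−σ}`-norm at most one. -/
def HGammaR (σ : ℝ) (w : (Fin 2 → ℝ) → ℝ) : ℝ≥0∞ :=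
  if 0 ≤ σ then HGamma2 σ w
  else ⨆ (φ : (Fin 2 → ℝ) → ℝ)
      (_ : ContDiff ℝ (⊤ : ℕ∞) φ ∧ Per2 φ ∧ HGamma2 (-σ) φ ≤ 1),
      ENNReal.ofReal (∫ x in Q2, w x * φ x)

/-- The integer-order Sobolev `H^n(Ω)` norm. -/
def HOmega3n {E : Type*} [NormedAddCommGroup E] [NormedSpace ℝ E] (n : ℕ)
    (f : (Fin 3 → ℝ) → E) : ℝ≥0∞ :=
  (∑ k ∈ Finset.range (n + 1), ∫⁻ y in Q3, (‖iteratedFDeriv ℝ k f y‖₊ : ℝ≥0∞) ^ 2) ^ (1/2 : ℝ)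

/-- The Levi-Civita symbol `ε_{kli}` on three indices. -/
def eps (k l i : Fin 3) : ℝ :=
  (((l : ℕ) : ℝ) - ((k : ℕ) : ℝ)) * (((i : ℕ) : ℝ) - ((k : ℕ) : ℝ)) *
    (((i : ℕ) : ℝ) - ((l : ℕ) : ℝ)) / 2

/-- The (Euclidean) curl of a vector field on `ℝ³`. -/
def curl3 (X : (Fin 3 → ℝ) → (Fin 3 → ℝ)) (y : Fin 3 → ℝ) : Fin 3 → ℝ :=
  fun k => ∑ l : Fin 3, ∑ i : Fin 3, eps k l i * fderiv ℝ (fun z => X z i) y (Pi.single l 1)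

/-- The (Euclidean) divergence of a vector field on `ℝ³`. -/
def div3 (X : (Fin 3 → ℝ) → (Fin 3 → ℝ)) (y : Fin 3 → ℝ) : ℝ :=
  ∑ i : Fin 3, fderiv ℝ (fun z => X z i) y (Pi.single i 1)

/-! For `s = 1`, the pointwise identity `|∇X|² = |curl X|² + (div X)² + 2 × (Jacobians)` is the
algebraic form of `−ΔX = curl curl X − ∇ div X`. The Jacobians are null Lagrangians: they integrate
to the boundary pairings of the tangential components of `X` with `∂̄X · N`. The trace theorem
bounds the tangential components in `H^{1/2}(Γ)` by `‖X‖_{H¹}`, so these pairings are at most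
`C ‖X‖_{H¹} |∂̄X · N|_{H^{-1/2}}`, and one factor `‖X‖_{H¹}` cancels.

The trace theorem reduces to a Hardy inequality: the increment of the trace along `h` is compared
with the increment of the slice at depth `‖h‖`. That `∂_j : H^{1/2}(𝕋²) → H^{-1/2}(𝕋²)` is bounded
is seen without Fourier series: `2 ∫ φ ∂_j g` is the limit of `2ⁿ ∫ φ (g(· + T) − g(· − T))` with
`T = 2⁻ⁿ e_j`, which vanishes for `n = 0` by periodicity. The difference of consecutive terms is, by
summation by parts, an integral of an increment of `φ` times an increment of `g`, and the squares of
these increments are summable against `2ⁿ` by the Gagliardo seminorm.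

For higher `s`, the tangential derivatives commute with curl, div and the restriction to `Γ`, and
`∂₃X` is recovered algebraically from `curl X`, `div X` and the tangential derivatives. -/

section
open Set Filter Topology

/-! ### Integration over the torus -/

section

variable {E F : Type*}

theorem Per2.comp {f : (Fin 2 → ℝ) → E} (hf : Per2 f) (φ : E → F) : Per2 fun x => φ (f x) :=
  fun x k => congrArg φ (hf x k)

theorem Per2.comp₂ {G : Type*} {f : (Fin 2 → ℝ) → E} {g : (Fin 2 → ℝ) → F} (hf : Per2 f)
    (hg : Per2 g) (φ : E → F → G) : Per2 fun x => φ (f x) (g x) :=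
  fun x k => congrArg₂ φ (hf x k) (hg x k)

theorem Per2.comp_add_right {f : (Fin 2 → ℝ) → E} (hf : Per2 f) (a : Fin 2 → ℝ) :
    Per2 fun x => f (x + a) := by
  intro x k
  simp only [add_right_comm x _ a, hf _ k]

theorem measurableSet_Q2 : MeasurableSet Q2 :=
  MeasurableSet.univ_pi fun _ => measurableSet_Ioo

theorem integrableOn_Q2 [NormedAddCommGroup E] {f : (Fin 2 → ℝ) → E} (hf : Continuous f) :
    IntegrableOn f Q2 :=
  (hf.continuousOn.integrableOn_compact (isCompact_univ_pi fun _ => isCompact_Icc)).mono_set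
    (pi_mono fun _ _ => Ioo_subset_Icc_self)

/-- The integer lattice in `ℝ²`, whose quotient is the torus. -/
abbrev latticeZ2 : Submodule ℤ (Fin 2 → ℝ) :=
  Submodule.span ℤ (range (Pi.basisFun ℝ (Fin 2)))

theorem Per2.vadd {f : (Fin 2 → ℝ) → E} (hf : Per2 f) (g : latticeZ2) (x : Fin 2 → ℝ) :
    f (g +ᵥ x) = f x := by
  choose k hk using (Module.Basis.mem_span_iff_repr_mem ℤ (Pi.basisFun ℝ (Fin 2)) _).1 g.2
  have hg : (g : Fin 2 → ℝ) = fun i => (k i : ℝ) := by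
    funext i
    simpa using (hk i).symm
  rw [Submodule.vadd_def, hg, vadd_eq_add, add_comm]
  exact hf x k

instance : VAddInvariantMeasure latticeZ2 (Fin 2 → ℝ) volume :=
  inferInstanceAs (VAddInvariantMeasure latticeZ2.toAddSubgroup (Fin 2 → ℝ) volume)

theorem isAddFundamentalDomain_latticeZ2_preimage_sub (a : Fin 2 → ℝ) :
    IsAddFundamentalDomain latticeZ2
      ((fun x => x - a) ⁻¹' ZSpan.fundamentalDomain (Pi.basisFun ℝ (Fin 2))) volume :=
  (ZSpan.isAddFundamentalDomain (Pi.basisFun ℝ (Fin 2)) volume).preimage_of_equiv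
    (measurePreserving_sub_right volume a).quasiMeasurePreserving Function.bijective_id
    fun g x => add_sub_assoc (g : Fin 2 → ℝ) x a

theorem restrict_Q2 :
    volume.restrict Q2 = volume.restrict (ZSpan.fundamentalDomain (Pi.basisFun ℝ (Fin 2))) := by
  rw [ZSpan.fundamentalDomain_pi_basisFun]
  exact Measure.restrict_congr_set
    (Measure.univ_pi_Ioo_ae_eq_Icc.trans Measure.univ_pi_Ico_ae_eq_Icc.symm)

theorem map_add_right_restrict_Q2 (a : Fin 2 → ℝ) :
    (volume.restrict Q2).map (fun x => x + a) = volume.restrict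
      ((fun x => x - a) ⁻¹' ZSpan.fundamentalDomain (Pi.basisFun ℝ (Fin 2))) := by
  have h := (measurableEmbedding_addRight a).restrict_map volume
    ((fun x => x - a) ⁻¹' ZSpan.fundamentalDomain (Pi.basisFun ℝ (Fin 2)))
  rw [map_add_right_eq_self] at h
  rw [restrict_Q2, h]
  congr 2
  ext x
  simp

theorem Per2.setLIntegral_comp_add_right {G : (Fin 2 → ℝ) → ℝ≥0∞} (hG : Per2 G)
    (a : Fin 2 → ℝ) : ∫⁻ x in Q2, G (x + a) = ∫⁻ x in Q2, G x := by
  rw [← (measurableEmbedding_addRight a).lintegral_map G, map_add_right_restrict_Q2, restrict_Q2]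
  exact (isAddFundamentalDomain_latticeZ2_preimage_sub a).setLIntegral_eq
    (ZSpan.isAddFundamentalDomain _ volume) _ hG.vadd

theorem Per2.setIntegral_comp_add_right [NormedAddCommGroup E] [NormedSpace ℝ E]
    {g : (Fin 2 → ℝ) → E} (hg : Per2 g) (a : Fin 2 → ℝ) :
    ∫ x in Q2, g (x + a) = ∫ x in Q2, g x := by
  rw [← (measurableEmbedding_addRight a).integral_map g, map_add_right_restrict_Q2, restrict_Q2]
  exact (isAddFundamentalDomain_latticeZ2_preimage_sub a).setIntegral_eq
    (ZSpan.isAddFundamentalDomain _ volume) hg.vadd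

theorem Per2.setLIntegral_eq_ball {G : (Fin 2 → ℝ) → ℝ≥0∞} (hG : Per2 G) :
    ∫⁻ x in Q2, G x = ∫⁻ x in Metric.ball (0 : Fin 2 → ℝ) (1 / 2), G x := by
  have hball : (fun x : Fin 2 → ℝ => x + fun _ => -(1 / 2)) ⁻¹' Metric.ball 0 (1 / 2) = Q2 := by
    ext x
    simp only [Q2, mem_preimage, mem_univ_pi, mem_ball_zero_iff,
      pi_norm_lt_iff (one_half_pos : (0 : ℝ) < 1 / 2), Pi.add_apply, Real.norm_eq_abs, abs_lt]
    refine forall_congr' fun i => ?_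
    constructor <;> rintro ⟨h₁, h₂⟩ <;> constructor <;> linarith
  rw [← hG.setLIntegral_comp_add_right fun _ => -(1 / 2), ← hball]
  exact (measurePreserving_add_right volume _).setLIntegral_comp_preimage_emb
    (measurableEmbedding_addRight _) G _

end

/-! ### Increments in `L²` and the Gagliardo seminorm -/

section

variable {E : Type*} [NormedAddCommGroup E]

theorem enorm_add_sq_le (a b : E) : ‖a + b‖ₑ ^ 2 ≤ 2 * ‖a‖ₑ ^ 2 + 2 * ‖b‖ₑ ^ 2 := by
  have h : ‖a + b‖₊ ^ 2 ≤ 2 * ‖a‖₊ ^ 2 + 2 * ‖b‖₊ ^ 2 := by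
    rw [← mul_add]
    exact (pow_le_pow_left' (nnnorm_add_le a b) 2).trans add_sq_le
  simp only [enorm_eq_nnnorm]
  exact_mod_cast h

theorem lintegral_enorm_add_sq_le {α : Type*} [MeasurableSpace α] {μ : Measure α} {f : α → E}
    (hf : AEStronglyMeasurable f μ) (g : α → E) :
    ∫⁻ x, ‖f x + g x‖ₑ ^ 2 ∂μ ≤ 2 * ∫⁻ x, ‖f x‖ₑ ^ 2 ∂μ + 2 * ∫⁻ x, ‖g x‖ₑ ^ 2 ∂μ := by
  rw [← lintegral_const_mul' _ _ (by norm_num), ← lintegral_const_mul' _ _ (by norm_num),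
    ← lintegral_add_left' ((hf.enorm.pow_const 2).const_mul 2)]
  exact lintegral_mono fun x => enorm_add_sq_le _ _

/-- The square of the `L²` modulus of continuity of a function on the torus `𝕋²`, at the
increment `h`. -/
def l2ModulusSq (f : (Fin 2 → ℝ) → E) (h : Fin 2 → ℝ) : ℝ≥0∞ :=
  ∫⁻ x in Q2, ‖f (x + h) - f x‖ₑ ^ 2

theorem Per2.l2ModulusSq_add_le {f : (Fin 2 → ℝ) → E} (hf : Per2 f) (hc : Continuous f)
    (a b : Fin 2 → ℝ) :
    l2ModulusSq f (a + b) ≤ 2 * l2ModulusSq f a + 2 * l2ModulusSq f b := by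
  have hsplit : l2ModulusSq f (a + b) =
      ∫⁻ x in Q2, ‖(f (x + b + a) - f (x + b)) + (f (x + b) - f x)‖ₑ ^ 2 := by
    simp only [sub_add_sub_cancel, add_assoc, add_comm b a, l2ModulusSq]
  have hshift : ∫⁻ x in Q2, ‖f (x + b + a) - f (x + b)‖ₑ ^ 2 = l2ModulusSq f a :=
    ((hf.comp_add_right a).comp₂ hf fun u v => ‖u - v‖ₑ ^ 2).setLIntegral_comp_add_right b
  rw [hsplit, ← hshift]
  exact lintegral_enorm_add_sq_le
    (by fun_prop : Continuous fun x => f (x + b + a) - f (x + b)).aestronglyMeasurable _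

theorem l2ModulusSq_fun_add_le {f g : (Fin 2 → ℝ) → E} (hf : Continuous f) (h : Fin 2 → ℝ) :
    l2ModulusSq (fun x => f x + g x) h ≤ 2 * l2ModulusSq f h + 2 * l2ModulusSq g h := by
  simp only [l2ModulusSq, add_sub_add_comm]
  exact lintegral_enorm_add_sq_le
    (by fun_prop : Continuous fun x => f (x + h) - f x).aestronglyMeasurable _

theorem Per2.l2ModulusSq_le_four_mul {f : (Fin 2 → ℝ) → E} (hf : Per2 f) (hc : Continuous f)
    (h : Fin 2 → ℝ) : l2ModulusSq f h ≤ 4 * ∫⁻ x in Q2, ‖f x‖ₑ ^ 2 := by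
  have hshift : ∫⁻ x in Q2, ‖f (x + h)‖ₑ ^ 2 = ∫⁻ x in Q2, ‖f x‖ₑ ^ 2 :=
    (hf.comp fun v => ‖v‖ₑ ^ 2).setLIntegral_comp_add_right h
  simp only [l2ModulusSq, sub_eq_add_neg]
  refine (lintegral_enorm_add_sq_le
    (by fun_prop : Continuous fun x => f (x + h)).aestronglyMeasurable _).trans_eq ?_
  simp only [enorm_neg, hshift]
  ring

theorem measurable_l2ModulusSq {f : (Fin 2 → ℝ) → E} (hc : Continuous f) :
    Measurable (l2ModulusSq f) :=
  Measurable.lintegral_prod_right' (f := fun p : (Fin 2 → ℝ) × (Fin 2 → ℝ) =>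
    ‖f (p.2 + p.1) - f p.2‖ₑ ^ 2) ((by fun_prop : Continuous _).measurable)

theorem pdist2_add_intCast (x y : Fin 2 → ℝ) (k : Fin 2 → ℤ) :
    pdist2 x (y + fun i => (k i : ℝ)) = pdist2 x y := by
  refine (Equiv.subRight k).iInf_congr fun m => congrArg norm ?_
  ext i
  simp only [Equiv.subRight_apply, Pi.add_apply, Pi.sub_apply, Int.cast_sub]
  ring

theorem pdist2_add_left_of_norm_lt_half (x : Fin 2 → ℝ) {h : Fin 2 → ℝ} (hh : ‖h‖ < 1 / 2) :
    pdist2 x (x + h) = ‖h‖ := by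
  simp only [pdist2, sub_add_cancel_left, neg_add_eq_sub]
  have hzero : ‖(fun i => ((0 : Fin 2 → ℤ) i : ℝ)) - h‖ = ‖h‖ := by
    rw [← norm_neg h, ← zero_sub h]
    congr 2
    ext
    exact Int.cast_zero
  have hbdd : BddBelow (range fun k : Fin 2 → ℤ => ‖(fun i => (k i : ℝ)) - h‖) :=
    ⟨0, forall_mem_range.2 fun k => norm_nonneg _⟩
  refine le_antisymm ((ciInf_le hbdd 0).trans_eq hzero) (le_ciInf fun k => ?_)
  by_cases hk : k = 0
  · rw [hk, hzero]
  obtain ⟨i, hi⟩ := Function.ne_iff.1 hk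
  have hki : (1 : ℝ) ≤ |(k i : ℝ)| := mod_cast Int.one_le_abs hi
  have hcoord := norm_le_pi_norm ((fun i => (k i : ℝ)) - h) i
  have hhi := norm_le_pi_norm h i
  have htri := abs_sub_abs_le_abs_sub (k i : ℝ) (h i)
  simp only [Pi.sub_apply, Real.norm_eq_abs] at hcoord hhi
  linarith

theorem Per2.gagliardo2Sq_eq_lintegral_l2ModulusSq {f : (Fin 2 → ℝ) → E} (hf : Per2 f)
    (hc : Continuous f) (θ : ℝ) :
    gagliardo2Sq θ f = ∫⁻ h in Metric.ball 0 (1 / 2),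
      l2ModulusSq f h / ENNReal.ofReal (‖h‖ ^ (2 + 2 * θ)) := by
  have hinner (x : Fin 2 → ℝ) :
      ∫⁻ y in Q2, (‖f x - f y‖₊ : ℝ≥0∞) ^ 2 / ENNReal.ofReal (pdist2 x y ^ (2 + 2 * θ)) =
        ∫⁻ h in Metric.ball 0 (1 / 2),
          ‖f (x + h) - f x‖ₑ ^ 2 / ENNReal.ofReal (‖h‖ ^ (2 + 2 * θ)) := by
    have hG : Per2 fun y =>
        (‖f x - f y‖₊ : ℝ≥0∞) ^ 2 / ENNReal.ofReal (pdist2 x y ^ (2 + 2 * θ)) := by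
      intro y k
      simp only [hf y k, pdist2_add_intCast]
    rw [← hG.setLIntegral_comp_add_right x, (hG.comp_add_right x).setLIntegral_eq_ball]
    refine setLIntegral_congr_fun Metric.isOpen_ball.measurableSet ?_
    intro h hh
    simp only [add_comm h x, pdist2_add_left_of_norm_lt_half x (mem_ball_zero_iff.1 hh),
      ← enorm_eq_nnnorm, enorm_sub_rev (f x)]
  have hcont : Continuous fun p : (Fin 2 → ℝ) × (Fin 2 → ℝ) => ‖f (p.1 + p.2) - f p.1‖ₑ ^ 2 := by
    fun_prop
  simp only [gagliardo2Sq, hinner]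
  rw [lintegral_lintegral_swap (hcont.measurable.div (by fun_prop)).aemeasurable]
  refine lintegral_congr fun h => ?_
  have hcont_left : Continuous fun x => ‖f (x + h) - f x‖ₑ ^ 2 := by fun_prop
  simp only [div_eq_mul_inv]
  exact lintegral_mul_const _ hcont_left.measurable

/-- The dyadic shell `t / 2 ≤ ‖h‖ < t` of increments. -/
def dyadicShell (t : ℝ) : Set (Fin 2 → ℝ) := {h | t / 2 ≤ ‖h‖ ∧ ‖h‖ < t}

theorem measurableSet_dyadicShell (t : ℝ) : MeasurableSet (dyadicShell t) :=
  (measurableSet_le measurable_const measurable_norm).inter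
    (measurableSet_lt measurable_norm measurable_const)

/-- A box of increments `h` such that both `h` and `t e_j - h` lie in the dyadic shell of
outer radius `t`. -/
def shellBox (j : Fin 2) (t : ℝ) : Set (Fin 2 → ℝ) :=
  univ.pi fun i => if i = j then Ioo 0 t else Ioo (t / 2) t

theorem volume_shellBox (j : Fin 2) {t : ℝ} (ht : 0 < t) :
    volume (shellBox j t) = ENNReal.ofReal (t ^ 2 / 2) := by
  have hside (i : Fin 2) : volume (if i = j then Ioo 0 t else Ioo (t / 2) t) =
      ENNReal.ofReal (if i = j then t else t / 2) := by
    split_ifs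
    · rw [Real.volume_Ioo, sub_zero]
    · rw [Real.volume_Ioo, sub_half]
  rw [shellBox, volume_pi_pi, Finset.prod_congr rfl fun i _ => hside i,
    ← ENNReal.ofReal_prod_of_nonneg fun i _ => by split_ifs <;> positivity]
  congr 1
  fin_cases j <;> simp <;> ring

theorem mem_shellBox_iff {j i : Fin 2} (hij : i ≠ j) {t : ℝ} {h : Fin 2 → ℝ} :
    h ∈ shellBox j t ↔ h j ∈ Ioo 0 t ∧ h i ∈ Ioo (t / 2) t := by
  have hfin (p : Fin 2 → Prop) : (∀ l, p l) ↔ p j ∧ p i := by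
    fin_cases i <;> fin_cases j <;> simp_all [Fin.forall_fin_two, and_comm]
  rw [shellBox, mem_univ_pi, hfin, if_pos rfl, if_neg hij]

theorem mem_dyadicShell_of_coord {j i : Fin 2} (hij : i ≠ j) {t : ℝ} (ht : 0 < t) {h : Fin 2 → ℝ}
    (hj : |h j| < t) (hi : |h i| ∈ Ioo (t / 2) t) : h ∈ dyadicShell t := by
  refine ⟨hi.1.le.trans (norm_le_pi_norm h i), (pi_norm_lt_iff ht).2 fun l => ?_⟩
  obtain rfl | rfl : l = i ∨ l = j := by omega
  exacts [hi.2, hj]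

theorem shellBox_subset_dyadicShell (j : Fin 2) {t : ℝ} (ht : 0 < t) :
    shellBox j t ⊆ dyadicShell t := by
  obtain ⟨i, hij⟩ := exists_ne j
  intro h hh
  obtain ⟨⟨hj₀, hj₁⟩, hi₀, hi₁⟩ := (mem_shellBox_iff hij).1 hh
  refine mem_dyadicShell_of_coord hij ht ?_ ?_
  · rwa [abs_of_pos hj₀]
  · rw [abs_of_pos (by linarith)]
    exact ⟨hi₀, hi₁⟩

theorem shellBox_subset_preimage_dyadicShell (j : Fin 2) {t : ℝ} (ht : 0 < t) :
    shellBox j t ⊆ (fun h => Pi.single j t - h) ⁻¹' dyadicShell t := by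
  obtain ⟨i, hij⟩ := exists_ne j
  intro h hh
  obtain ⟨⟨hj₀, hj₁⟩, hi₀, hi₁⟩ := (mem_shellBox_iff hij).1 hh
  rw [mem_preimage]
  refine mem_dyadicShell_of_coord hij ht ?_ ?_
  · rw [Pi.sub_apply, Pi.single_eq_same, abs_of_pos (by linarith)]
    linarith
  · rw [Pi.sub_apply, Pi.single_eq_of_ne hij, zero_sub, abs_neg, abs_of_pos (by linarith)]
    exact ⟨hi₀, hi₁⟩

theorem Per2.l2ModulusSq_single_mul_volume_le {f : (Fin 2 → ℝ) → E} (hf : Per2 f)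
    (hc : Continuous f) (j : Fin 2) {t : ℝ} (ht : 0 < t) :
    l2ModulusSq f (Pi.single j t) * volume (shellBox j t) ≤
      4 * ∫⁻ h in dyadicShell t, l2ModulusSq f h := by
  have hmeas := measurable_l2ModulusSq hc
  have hreflect : MeasurePreserving (fun h : Fin 2 → ℝ => Pi.single j t - h) volume volume :=
    Measure.measurePreserving_sub_left volume _
  have hpoint (h : Fin 2 → ℝ) : l2ModulusSq f (Pi.single j t) ≤
      2 * l2ModulusSq f h + 2 * l2ModulusSq f (Pi.single j t - h) := by
    have h_add := hf.l2ModulusSq_add_le hc h (Pi.single j t - h)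
    rwa [add_sub_cancel] at h_add
  rw [← setLIntegral_const]
  calc ∫⁻ _ in shellBox j t, l2ModulusSq f (Pi.single j t)
      ≤ ∫⁻ h in shellBox j t, (2 * l2ModulusSq f h + 2 * l2ModulusSq f (Pi.single j t - h)) := by
        gcongr with h
        exact hpoint h
    _ = 2 * (∫⁻ h in shellBox j t, l2ModulusSq f h) +
          2 * ∫⁻ h in shellBox j t, l2ModulusSq f (Pi.single j t - h) := by
        rw [lintegral_add_left (hmeas.const_mul _), lintegral_const_mul _ hmeas,
          lintegral_const_mul' _ _ (by norm_num)]
    _ ≤ 2 * (∫⁻ h in dyadicShell t, l2ModulusSq f h) +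
          2 * ∫⁻ h in dyadicShell t, l2ModulusSq f h := by
        gcongr 2 * ?_ + 2 * ?_
        · exact lintegral_mono_set (shellBox_subset_dyadicShell j ht)
        · exact (lintegral_mono_set (shellBox_subset_preimage_dyadicShell j ht)).trans_eq
            (hreflect.setLIntegral_comp_preimage (measurableSet_dyadicShell t) hmeas)
    _ = 4 * ∫⁻ h in dyadicShell t, l2ModulusSq f h := by
        rw [← add_mul]
        norm_num

theorem setLIntegral_dyadicShell_le (G : (Fin 2 → ℝ) → ℝ≥0∞) {t p : ℝ} (ht : 0 < t)
    (hp : 0 ≤ p) :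
    ∫⁻ h in dyadicShell t, G h ≤
      ENNReal.ofReal (t ^ p) * ∫⁻ h in dyadicShell t, G h / ENNReal.ofReal (‖h‖ ^ p) := by
  rw [← lintegral_const_mul' _ _ ENNReal.ofReal_ne_top]
  refine setLIntegral_mono' (measurableSet_dyadicShell t) fun h ⟨hlo, hhi⟩ => ?_
  have hpos : 0 < ‖h‖ := (half_pos ht).trans_le hlo
  calc G h = ENNReal.ofReal (‖h‖ ^ p) * (G h / ENNReal.ofReal (‖h‖ ^ p)) :=
        (ENNReal.mul_div_cancel (ENNReal.ofReal_pos.2 (by positivity)).ne'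
          ENNReal.ofReal_ne_top).symm
    _ ≤ ENNReal.ofReal (t ^ p) * (G h / ENNReal.ofReal (‖h‖ ^ p)) := by gcongr

theorem Per2.l2ModulusSq_single_le {f : (Fin 2 → ℝ) → E} (hf : Per2 f) (hc : Continuous f)
    (j : Fin 2) {t : ℝ} (ht : 0 < t) :
    l2ModulusSq f (Pi.single j t) ≤ ENNReal.ofReal (8 * t) *
      ∫⁻ h in dyadicShell t, l2ModulusSq f h / ENNReal.ofReal (‖h‖ ^ (3 : ℝ)) := by
  have hmul := (hf.l2ModulusSq_single_mul_volume_le hc j ht).trans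
    (mul_le_mul_right (setLIntegral_dyadicShell_le (l2ModulusSq f) ht zero_le_three) 4)
  have hvol : ENNReal.ofReal (t ^ 2 / 2) ≠ 0 := (ENNReal.ofReal_pos.2 (by positivity)).ne'
  rw [volume_shellBox j ht, ← ENNReal.le_div_iff_mul_le (.inl hvol) (.inl ENNReal.ofReal_ne_top),
    ← mul_assoc, ENNReal.mul_div_right_comm, show (4 : ℝ≥0∞) = ENNReal.ofReal 4 by simp,
    ← ENNReal.ofReal_mul zero_le_four, ← ENNReal.ofReal_div_of_pos (by positivity)] at hmul
  convert hmul using 3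
  norm_cast
  field_simp
  norm_num

theorem pairwise_disjoint_dyadicShell :
    Pairwise (Function.onFun Disjoint fun n : ℕ => dyadicShell ((1 / 2) ^ (n + 1))) := by
  refine pairwise_disjoint_on _ |>.2 fun m n hmn => disjoint_left.2 ?_
  rintro h ⟨hlo, -⟩ ⟨-, hhi⟩
  have hpow : (1 / 2 : ℝ) ^ (n + 1) ≤ (1 / 2) ^ (m + 2) :=
    pow_le_pow_of_le_one (by norm_num) (by norm_num) (by omega)
  rw [pow_succ _ (m + 1)] at hpow
  linarith

theorem iUnion_dyadicShell_subset_ball :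
    ⋃ n : ℕ, dyadicShell ((1 / 2) ^ (n + 1)) ⊆ Metric.ball 0 (1 / 2) := by
  refine iUnion_subset fun n h ⟨_, hhi⟩ => mem_ball_zero_iff.2 (hhi.trans_le ?_)
  exact pow_le_of_le_one (by norm_num) (by norm_num) n.succ_ne_zero

theorem Per2.tsum_l2ModulusSq_single_le {f : (Fin 2 → ℝ) → E} (hf : Per2 f) (hc : Continuous f)
    (j : Fin 2) :
    ∑' n : ℕ, 2 ^ (n + 1) * l2ModulusSq f (Pi.single j ((1 / 2) ^ (n + 1))) ≤
      8 * gagliardo2Sq (1 / 2) f := by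
  have hterm (n : ℕ) : 2 ^ (n + 1) * l2ModulusSq f (Pi.single j ((1 / 2) ^ (n + 1))) ≤
      8 * ∫⁻ h in dyadicShell ((1 / 2) ^ (n + 1)),
        l2ModulusSq f h / ENNReal.ofReal (‖h‖ ^ (3 : ℝ)) := by
    refine (mul_le_mul_right (hf.l2ModulusSq_single_le hc j (by positivity)) _).trans_eq ?_
    have hscale : (2 : ℝ≥0∞) ^ (n + 1) * ENNReal.ofReal (8 * (1 / 2) ^ (n + 1)) = 8 := by
      rw [← ENNReal.ofReal_ofNat 2, ← ENNReal.ofReal_pow zero_le_two,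
        ← ENNReal.ofReal_mul (by positivity), mul_left_comm, ← mul_pow]
      norm_num
    rw [← mul_assoc, hscale]
  refine (ENNReal.tsum_le_tsum hterm).trans ?_
  rw [ENNReal.tsum_mul_left, ← lintegral_iUnion (fun n => measurableSet_dyadicShell _)
    pairwise_disjoint_dyadicShell, hf.gagliardo2Sq_eq_lintegral_l2ModulusSq hc,
    show (2 + 2 * (1 / 2) : ℝ) = 3 by norm_num]
  exact mul_le_mul_right (lintegral_mono_set iUnion_dyadicShell_subset_ball) 8

end

/-! ### Sharing one derivative between two factors -/

section

/-- The `i`-th partial derivative of a function on `ℝⁿ`. -/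
def pderiv {n : ℕ} {E : Type*} [NormedAddCommGroup E] [NormedSpace ℝ E] (i : Fin n)
    (f : (Fin n → ℝ) → E) (y : Fin n → ℝ) : E :=
  fderiv ℝ f y (Pi.single i 1)

theorem continuous_pderiv {n : ℕ} {E : Type*} [NormedAddCommGroup E] [NormedSpace ℝ E]
    {f : (Fin n → ℝ) → E} (hf : ContDiff ℝ 1 f) (i : Fin n) : Continuous (pderiv i f) :=
  (hf.continuous_fderiv one_ne_zero).clm_apply continuous_const

theorem norm_apply_single_one_le_one {n : ℕ} (E : Type*) [NormedAddCommGroup E]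
    [NormedSpace ℝ E] (i : Fin n) :
    ‖ContinuousLinearMap.apply ℝ E (Pi.single i 1 : Fin n → ℝ)‖ ≤ 1 := by
  refine ContinuousLinearMap.opNorm_le_bound _ zero_le_one fun A => ?_
  rw [one_mul, ContinuousLinearMap.apply_apply]
  refine (A.le_opNorm _).trans_eq ?_
  rw [Pi.norm_single, norm_one, mul_one]

theorem two_mul_enorm_mul_le (a b : ℝ) : 2 * ‖a * b‖ₑ ≤ ‖a‖ₑ ^ 2 + ‖b‖ₑ ^ 2 := by
  have h : 2 * (‖a‖₊ * ‖b‖₊) ≤ ‖a‖₊ ^ 2 + ‖b‖₊ ^ 2 := by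
    rw [← mul_assoc]
    exact two_mul_le_add_sq _ _
  rw [enorm_mul]
  simp only [enorm_eq_nnnorm]
  exact_mod_cast h

theorem two_mul_enorm_integral_mul_le {α : Type*} [MeasurableSpace α] {μ : Measure α}
    {u : α → ℝ} (hu : AEStronglyMeasurable u μ) (v : α → ℝ) :
    2 * ‖∫ x, u x * v x ∂μ‖ₑ ≤ ∫⁻ x, ‖u x‖ₑ ^ 2 ∂μ + ∫⁻ x, ‖v x‖ₑ ^ 2 ∂μ := by
  rw [← lintegral_add_left' (hu.enorm.pow_const 2)]
  calc 2 * ‖∫ x, u x * v x ∂μ‖ₑ ≤ 2 * ∫⁻ x, ‖u x * v x‖ₑ ∂μ :=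
        mul_le_mul_right (enorm_integral_le_lintegral_enorm _) 2
    _ = ∫⁻ x, 2 * ‖u x * v x‖ₑ ∂μ := (lintegral_const_mul' _ _ (by norm_num)).symm
    _ ≤ ∫⁻ x, (‖u x‖ₑ ^ 2 + ‖v x‖ₑ ^ 2) ∂μ := lintegral_mono fun x => two_mul_enorm_mul_le _ _

/-- The central difference `x ↦ g (x + T) - g (x - T)`. -/
def centralDiff (g : (Fin 2 → ℝ) → ℝ) (T x : Fin 2 → ℝ) : ℝ := g (x + T) - g (x - T)

theorem continuous_centralDiff {g : (Fin 2 → ℝ) → ℝ} (hg : Continuous g) (T : Fin 2 → ℝ) :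
    Continuous (centralDiff g T) := by
  unfold centralDiff
  fun_prop

theorem per2_centralDiff {g : (Fin 2 → ℝ) → ℝ} (hg : Per2 g) (T : Fin 2 → ℝ) :
    Per2 (centralDiff g T) := by
  have h := (hg.comp_add_right T).comp₂ (hg.comp_add_right (-T)) fun a b => a - b
  simp only [← sub_eq_add_neg] at h
  exact h

theorem centralDiff_add_self (g : (Fin 2 → ℝ) → ℝ) (T x : Fin 2 → ℝ) :
    centralDiff g (T + T) x = centralDiff g T (x + T) + centralDiff g T (x - T) := by
  simp only [centralDiff, add_sub_cancel_right, sub_add_cancel, add_assoc, sub_sub,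
    sub_add_sub_cancel]

theorem Per2.lintegral_centralDiff_sq {g : (Fin 2 → ℝ) → ℝ} (hg : Per2 g) (T : Fin 2 → ℝ) :
    ∫⁻ x in Q2, ‖centralDiff g T x‖ₑ ^ 2 = l2ModulusSq g (T + T) := by
  have hper : Per2 fun x => ‖centralDiff g T x‖ₑ ^ 2 :=
    (per2_centralDiff hg T).comp fun a => ‖a‖ₑ ^ 2
  rw [← hper.setLIntegral_comp_add_right T]
  simp only [centralDiff, add_sub_cancel_right, add_assoc, l2ModulusSq]

theorem Per2.two_mul_integral_mul_centralDiff_sub {φ g : (Fin 2 → ℝ) → ℝ} (hφ : Per2 φ)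
    (hg : Per2 g) (cφ : Continuous φ) (cg : Continuous g) (T : Fin 2 → ℝ) :
    2 * (∫ x in Q2, φ x * centralDiff g T x) -
        ∫ x in Q2, φ x * centralDiff g (T + T) x =
      ∫ x in Q2, (φ (x + T) - φ x) *
        (centralDiff g T (x + T) - centralDiff g T x) := by
  set k := centralDiff g T
  have ck : Continuous k := continuous_centralDiff cg T
  have hk : Per2 k := per2_centralDiff hg T
  have hdiag : ∫ x in Q2, φ (x + T) * k (x + T) = ∫ x in Q2, φ x * k x :=
    (hφ.comp₂ hk (· * ·)).setIntegral_comp_add_right T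
  have hback : ∫ x in Q2, φ (x + T) * k x = ∫ x in Q2, φ x * k (x - T) := by
    have hper : Per2 fun x => φ x * k (x - T) := by
      simpa only [sub_eq_add_neg] using hφ.comp₂ (hk.comp_add_right (-T)) (· * ·)
    simpa only [add_sub_cancel_right] using hper.setIntegral_comp_add_right T
  have hdouble : ∫ x in Q2, φ x * centralDiff g (T + T) x =
      (∫ x in Q2, φ x * k (x + T)) + ∫ x in Q2, φ x * k (x - T) := by
    have hk_add (x : Fin 2 → ℝ) : centralDiff g (T + T) x = k (x + T) + k (x - T) :=
      centralDiff_add_self g T x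
    simp only [hk_add, mul_add]
    exact integral_add (integrableOn_Q2 (by fun_prop)) (integrableOn_Q2 (by fun_prop))
  simp only [sub_mul, mul_sub]
  rw [integral_sub (integrableOn_Q2 (by fun_prop)) (integrableOn_Q2 (by fun_prop)),
    integral_sub (integrableOn_Q2 (by fun_prop)) (integrableOn_Q2 (by fun_prop)),
    integral_sub (integrableOn_Q2 (by fun_prop)) (integrableOn_Q2 (by fun_prop)),
    hdiag, hback, hdouble]
  ring

theorem Per2.l2ModulusSq_centralDiff_le {g : (Fin 2 → ℝ) → ℝ} (hg : Per2 g) (cg : Continuous g)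
    (T : Fin 2 → ℝ) : l2ModulusSq (centralDiff g T) T ≤ 16 * l2ModulusSq g T := by
  calc l2ModulusSq (centralDiff g T) T
      ≤ 4 * ∫⁻ x in Q2, ‖centralDiff g T x‖ₑ ^ 2 :=
        (per2_centralDiff hg T).l2ModulusSq_le_four_mul (continuous_centralDiff cg T) T
    _ = 4 * l2ModulusSq g (T + T) := by rw [hg.lintegral_centralDiff_sq]
    _ ≤ 4 * (2 * l2ModulusSq g T + 2 * l2ModulusSq g T) := by
        gcongr
        exact hg.l2ModulusSq_add_le cg T T
    _ = 16 * l2ModulusSq g T := by ring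

theorem Per2.two_mul_enorm_integral_centralDiff_le {φ g : (Fin 2 → ℝ) → ℝ} (hφ : Per2 φ)
    (hg : Per2 g) (cφ : Continuous φ) (cg : Continuous g) (T : Fin 2 → ℝ) :
    2 * ‖2 * (∫ x in Q2, φ x * centralDiff g T x) -
        ∫ x in Q2, φ x * centralDiff g (T + T) x‖ₑ ≤
      l2ModulusSq φ T + 16 * l2ModulusSq g T := by
  rw [hφ.two_mul_integral_mul_centralDiff_sub hg cφ cg]
  refine (two_mul_enorm_integral_mul_le
    (by fun_prop : Continuous fun x => φ (x + T) - φ x).aestronglyMeasurable _).trans ?_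
  exact add_le_add_right (hg.l2ModulusSq_centralDiff_le cg T) _

theorem hasDerivAt_comp_add_single {g : (Fin 2 → ℝ) → ℝ} (hg : ContDiff ℝ 1 g) (j : Fin 2)
    (x : Fin 2 → ℝ) (s : ℝ) :
    HasDerivAt (fun s : ℝ => g (x + Pi.single j s)) (pderiv j g (x + Pi.single j s)) s := by
  have hpath : HasDerivAt (fun s : ℝ => x + Pi.single j s) (Pi.single j 1) s :=
    ((ContinuousLinearMap.single ℝ (fun _ => ℝ) j).hasDerivAt (x := s)).const_add x
  exact (hg.differentiable one_ne_zero _).hasFDerivAt.comp_hasDerivAt s hpath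

theorem hasDerivAt_setIntegral_Q2_mul_comp_add_single {φ g : (Fin 2 → ℝ) → ℝ} (cφ : Continuous φ)
    (hg : ContDiff ℝ 1 g) (j : Fin 2) :
    HasDerivAt (fun s : ℝ => ∫ x in Q2, φ x * g (x + Pi.single j s))
      (∫ x in Q2, φ x * pderiv j g x) 0 := by
  have cg := hg.continuous
  have cg' := continuous_pderiv hg j
  have csingle : Continuous fun s : ℝ => (Pi.single j s : Fin 2 → ℝ) :=
    (LinearMap.single ℝ (fun _ => ℝ) j).continuous_of_finiteDimensional
  have cF (s : ℝ) : Continuous fun x => φ x * g (x + Pi.single j s) := by fun_prop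
  have cF' : Continuous fun p : ℝ × (Fin 2 → ℝ) =>
      φ p.2 * pderiv j g (p.2 + Pi.single j p.1) := by fun_prop
  have cF'₀ : Continuous fun x => φ x * pderiv j g (x + Pi.single j 0) :=
    cF'.comp (Continuous.prodMk_right 0)
  obtain ⟨C, hC⟩ := ((isCompact_Icc (a := (-1 : ℝ)) (b := 1)).prod
    (isCompact_Icc (a := (0 : Fin 2 → ℝ)) (b := 1))).exists_bound_of_continuousOn cF'.continuousOn
  have hbound : ∀ᵐ x ∂volume.restrict Q2, ∀ s ∈ Icc (-1 : ℝ) 1,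
      ‖φ x * pderiv j g (x + Pi.single j s)‖ ≤ C := by
    refine ae_restrict_of_forall_mem measurableSet_Q2 fun x hx s hs => hC (s, x) ⟨hs, ?_⟩
    exact ⟨fun i => (hx i trivial).1.le, fun i => (hx i trivial).2.le⟩
  have key := hasDerivAt_integral_of_dominated_loc_of_deriv_le
    (F := fun (s : ℝ) x => φ x * g (x + Pi.single j s)) (bound := fun _ => C)
    (Icc_mem_nhds neg_one_lt_zero one_pos) (.of_forall fun s => (cF s).aestronglyMeasurable)
    (integrableOn_Q2 (cF 0)) cF'₀.aestronglyMeasurable hbound (integrableOn_Q2 continuous_const)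
    (.of_forall fun x s _ => (hasDerivAt_comp_add_single hg j x s).const_mul (φ x))
  have hderiv := key.2
  simp only [Pi.single_zero, add_zero] at hderiv
  exact hderiv

end

section

theorem hasDerivAt_setIntegral_Q2_mul_centralDiff_single {φ g : (Fin 2 → ℝ) → ℝ}
    (cφ : Continuous φ) (hg : ContDiff ℝ 1 g) (j : Fin 2) :
    HasDerivAt (fun s : ℝ => ∫ x in Q2, φ x * centralDiff g (Pi.single j s) x)
      (2 * ∫ x in Q2, φ x * pderiv j g x) 0 := by
  have cg := hg.continuous
  have hforward := hasDerivAt_setIntegral_Q2_mul_comp_add_single cφ hg j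
  have hbackward : HasDerivAt (fun s : ℝ => ∫ x in Q2, φ x * g (x + Pi.single j (-s)))
      (-∫ x in Q2, φ x * pderiv j g x) 0 := by
    rw [← sub_zero (0 : ℝ)] at hforward
    simpa only [zero_sub] using hforward.comp_const_sub 0 0
  have hsplit (s : ℝ) : ∫ x in Q2, φ x * centralDiff g (Pi.single j s) x =
      (∫ x in Q2, φ x * g (x + Pi.single j s)) - ∫ x in Q2, φ x * g (x + Pi.single j (-s)) := by
    simp only [centralDiff, mul_sub, Pi.single_neg, ← sub_eq_add_neg]
    exact integral_sub (integrableOn_Q2 (by fun_prop)) (integrableOn_Q2 (by fun_prop))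
  simp only [hsplit]
  exact (hforward.sub hbackward).congr_deriv (by ring)

theorem tendsto_two_pow_mul_setIntegral_centralDiff {φ g : (Fin 2 → ℝ) → ℝ}
    (cφ : Continuous φ) (hg : ContDiff ℝ 1 g) (j : Fin 2) :
    Tendsto (fun n : ℕ => 2 ^ n * ∫ x in Q2, φ x * centralDiff g (Pi.single j ((1 / 2) ^ n)) x)
      atTop (𝓝 (2 * ∫ x in Q2, φ x * pderiv j g x)) := by
  have hslope :=
    (hasDerivAt_setIntegral_Q2_mul_centralDiff_single cφ hg j).tendsto_slope_zero_right
  refine (hslope.comp (tendsto_pow_atTop_nhdsWithin_zero_of_lt_one (r := (1 / 2 : ℝ))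
    one_half_pos one_half_lt_one)).congr fun n => ?_
  simp [centralDiff]

theorem Per2.centralDiff_single_one {g : (Fin 2 → ℝ) → ℝ} (hg : Per2 g) (j : Fin 2)
    (x : Fin 2 → ℝ) : centralDiff g (Pi.single j 1) x = 0 := by
  have hlattice : (Pi.single j 1 : Fin 2 → ℝ) = fun i => ((Pi.single j 1 : Fin 2 → ℤ) i : ℝ) := by
    ext i
    simp only [Pi.single_apply, Int.cast_ite, Int.cast_one, Int.cast_zero]
  have hshift (y : Fin 2 → ℝ) : g (y + Pi.single j 1) = g y := by
    rw [hlattice]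
    exact hg y _
  rw [centralDiff, hshift, ← hshift (x - _), sub_add_cancel, sub_self]

theorem Per2.four_mul_enorm_sub_le {φ g : (Fin 2 → ℝ) → ℝ} (hφ : Per2 φ) (hg : Per2 g)
    (cφ : Continuous φ) (cg : Continuous g) (j : Fin 2) (n : ℕ) :
    4 * ‖2 ^ (n + 1) * (∫ x in Q2, φ x * centralDiff g (Pi.single j ((1 / 2) ^ (n + 1))) x) -
        2 ^ n * ∫ x in Q2, φ x * centralDiff g (Pi.single j ((1 / 2) ^ n)) x‖ₑ ≤
      2 ^ (n + 1) * l2ModulusSq φ (Pi.single j ((1 / 2) ^ (n + 1))) +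
        16 * (2 ^ (n + 1) * l2ModulusSq g (Pi.single j ((1 / 2) ^ (n + 1)))) := by
  set T : Fin 2 → ℝ := Pi.single j ((1 / 2) ^ (n + 1))
  have hdouble : (Pi.single j ((1 / 2) ^ n) : Fin 2 → ℝ) = T + T := by
    rw [← Pi.single_add, pow_succ, ← mul_add, add_halves, mul_one]
  have hpow : ‖(2 : ℝ) ^ n‖ₑ = 2 ^ n := by
    rw [enorm_pow, Real.enorm_of_nonneg zero_le_two, ENNReal.ofReal_ofNat]
  rw [hdouble, pow_succ, mul_assoc, ← mul_sub, enorm_mul, hpow]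
  have hstep := mul_le_mul_right (hφ.two_mul_enorm_integral_centralDiff_le hg cφ cg T)
    (2 ^ (n + 1))
  refine (Eq.le ?_).trans (hstep.trans_eq ?_) <;> ring

theorem Per2.enorm_setIntegral_mul_pderiv_le {φ g : (Fin 2 → ℝ) → ℝ} (hφ : Per2 φ)
    (hg : Per2 g) (cφ : Continuous φ) (cg : ContDiff ℝ 1 g) (j : Fin 2) :
    ‖∫ x in Q2, φ x * pderiv j g x‖ₑ ≤
      gagliardo2Sq (1 / 2) φ + 16 * gagliardo2Sq (1 / 2) g := by
  set a : ℕ → ℝ := fun n => 2 ^ n * ∫ x in Q2, φ x * centralDiff g (Pi.single j ((1 / 2) ^ n)) x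
  have ha₀ : a 0 = 0 := by simp [a, hg.centralDiff_single_one]
  have htelescope : 2 * ‖∫ x in Q2, φ x * pderiv j g x‖ₑ ≤ ∑' n, ‖a (n + 1) - a n‖ₑ := by
    have ha : Tendsto a atTop (𝓝 (2 * ∫ x in Q2, φ x * pderiv j g x)) :=
      tendsto_two_pow_mul_setIntegral_centralDiff cφ cg j
    have h := edist_le_tsum_of_edist_le_of_tendsto₀ (fun n => ‖a (n + 1) - a n‖ₑ)
      (fun n => by rw [edist_comm, edist_eq_enorm_sub]) ha
    rwa [ha₀, edist_eq_enorm_sub, zero_sub, enorm_neg, enorm_mul, Real.enorm_of_nonneg zero_le_two,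
      ENNReal.ofReal_ofNat] at h
  have hsum : 8 * ‖∫ x in Q2, φ x * pderiv j g x‖ₑ ≤
      8 * (gagliardo2Sq (1 / 2) φ + 16 * gagliardo2Sq (1 / 2) g) := by
    calc 8 * ‖∫ x in Q2, φ x * pderiv j g x‖ₑ
        = 4 * (2 * ‖∫ x in Q2, φ x * pderiv j g x‖ₑ) := by ring
      _ ≤ ∑' n, 4 * ‖a (n + 1) - a n‖ₑ := by
          rw [ENNReal.tsum_mul_left]
          gcongr
      _ ≤ ∑' n, (2 ^ (n + 1) * l2ModulusSq φ (Pi.single j ((1 / 2) ^ (n + 1))) +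
            16 * (2 ^ (n + 1) * l2ModulusSq g (Pi.single j ((1 / 2) ^ (n + 1))))) :=
          ENNReal.tsum_le_tsum (hφ.four_mul_enorm_sub_le hg cφ cg.continuous j)
      _ ≤ 8 * gagliardo2Sq (1 / 2) φ + 16 * (8 * gagliardo2Sq (1 / 2) g) := by
          rw [ENNReal.tsum_add, ENNReal.tsum_mul_left]
          gcongr
          exacts [hφ.tsum_l2ModulusSq_single_le cφ j, hg.tsum_l2ModulusSq_single_le cg.continuous j]
      _ = 8 * (gagliardo2Sq (1 / 2) φ + 16 * gagliardo2Sq (1 / 2) g) := by ring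
  exact (ENNReal.mul_le_mul_iff_right (by norm_num) (by norm_num)).1 hsum

end

/-! ### The trace theorem -/

section

theorem lintegral_fun_norm_addHaar {V : Type*} [NormedAddCommGroup V] [NormedSpace ℝ V]
    [FiniteDimensional ℝ V] [Nontrivial V] [MeasurableSpace V] [BorelSpace V] (μ : Measure V)
    [μ.IsAddHaarMeasure] {ψ : ℝ → ℝ≥0∞} (hψ : Measurable ψ) :
    ∫⁻ x, ψ ‖x‖ ∂μ = Module.finrank ℝ V * μ (Metric.ball 0 1) *
      ∫⁻ r in Ioi (0 : ℝ), ENNReal.ofReal (r ^ (Module.finrank ℝ V - 1)) * ψ r := by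
  calc ∫⁻ x, ψ ‖x‖ ∂μ
      = ∫⁻ x : ({0}ᶜ : Set V), ψ ‖(x : V)‖ ∂μ.comap (↑) := by
        rw [lintegral_subtype_comap (measurableSet_singleton _).compl fun x : V => ψ ‖x‖,
          restrict_compl_singleton]
    _ = ∫⁻ p, ψ p.2 ∂μ.toSphere.prod (.volumeIoiPow (Module.finrank ℝ V - 1)) := by
        simpa using μ.measurePreserving_homeomorphUnitSphereProd.lintegral_comp_emb
          (Homeomorph.measurableEmbedding _) (ψ ∘ Subtype.val ∘ Prod.snd)
    _ = μ.toSphere univ * ∫⁻ r : Ioi (0 : ℝ), ψ r ∂.volumeIoiPow (Module.finrank ℝ V - 1) := by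
        rw [lintegral_prod _ (by fun_prop)]
        simp only [lintegral_const, mul_comm]
    _ = _ := by
        rw [Measure.volumeIoiPow, lintegral_withDensity_eq_lintegral_mul _ (by fun_prop)
          (by fun_prop), μ.toSphere_apply_univ,
          ← lintegral_subtype_comap measurableSet_Ioi fun r : ℝ =>
            ENNReal.ofReal (r ^ (Module.finrank ℝ V - 1)) * ψ r]
        rfl

theorem setLIntegral_ball_fun_norm_addHaar {V : Type*} [NormedAddCommGroup V] [NormedSpace ℝ V]
    [FiniteDimensional ℝ V] [Nontrivial V] [MeasurableSpace V] [BorelSpace V] (μ : Measure V)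
    [μ.IsAddHaarMeasure] {ψ : ℝ → ℝ≥0∞} (hψ : Measurable ψ) (R : ℝ) :
    ∫⁻ x in Metric.ball 0 R, ψ ‖x‖ ∂μ = Module.finrank ℝ V * μ (Metric.ball 0 1) *
      ∫⁻ r in Ioo 0 R, ENNReal.ofReal (r ^ (Module.finrank ℝ V - 1)) * ψ r := by
  have hball : ∫⁻ x in Metric.ball 0 R, ψ ‖x‖ ∂μ = ∫⁻ x, (Iio R).indicator ψ ‖x‖ ∂μ := by
    rw [← lintegral_indicator Metric.isOpen_ball.measurableSet]
    simp only [indicator, mem_ball_zero_iff, mem_Iio]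
  have hIoo : (Ioo 0 R : Set ℝ) = Iio R ∩ Ioi 0 := inter_comm _ _
  rw [hball, lintegral_fun_norm_addHaar μ (hψ.indicator measurableSet_Iio), hIoo,
    ← Measure.restrict_restrict measurableSet_Iio, ← lintegral_indicator measurableSet_Iio]
  simp only [indicator, mul_ite, mul_zero]

theorem sq_lintegral_mul_le {α : Type*} [MeasurableSpace α] {μ : Measure α} {f g : α → ℝ≥0∞}
    (hf : AEMeasurable f μ) (hg : AEMeasurable g μ) :
    (∫⁻ x, f x * g x ∂μ) ^ 2 ≤ (∫⁻ x, f x ^ 2 ∂μ) * ∫⁻ x, g x ^ 2 ∂μ := by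
  have h := pow_le_pow_left'
    (ENNReal.lintegral_mul_le_Lp_mul_Lq μ Real.HolderConjugate.two_two hf hg) 2
  simpa only [Pi.mul_apply, ENNReal.rpow_two, mul_pow, ← ENNReal.rpow_mul_natCast, Nat.cast_ofNat,
    one_div, inv_mul_cancel₀ (two_ne_zero (α := ℝ)), ENNReal.rpow_one] using h

theorem lintegral_Ioo_ofReal_rpow {p ρ : ℝ} (hp : -1 < p) (hρ : 0 ≤ ρ) :
    ∫⁻ t in Ioo 0 ρ, ENNReal.ofReal (t ^ p) = ENNReal.ofReal (ρ ^ (p + 1) / (p + 1)) := by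
  have hint : IntegrableOn (fun t : ℝ => t ^ p) (Ioo 0 ρ) :=
    (intervalIntegrable_iff_integrableOn_Ioo_of_le hρ).1
      (intervalIntegral.intervalIntegrable_rpow' hp)
  rw [← ofReal_integral_eq_lintegral_ofReal hint (ae_restrict_of_forall_mem measurableSet_Ioo
      fun t ht => Real.rpow_nonneg ht.1.le p),
    ← integral_Ioc_eq_integral_Ioo, ← intervalIntegral.integral_of_le hρ,
    integral_rpow (.inl hp), Real.zero_rpow (by linarith), sub_zero]

theorem lintegral_Ioi_ofReal_rpow {p t : ℝ} (hp : p < -1) (ht : 0 < t) :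
    ∫⁻ r in Ioi t, ENNReal.ofReal (r ^ p) = ENNReal.ofReal (-t ^ (p + 1) / (p + 1)) := by
  rw [← ofReal_integral_eq_lintegral_ofReal (integrableOn_Ioi_rpow_of_lt hp ht)
    (ae_restrict_of_forall_mem measurableSet_Ioi fun r hr =>
      Real.rpow_nonneg (ht.trans hr).le p), integral_Ioi_rpow_of_lt hp ht]

variable {E : Type*} [NormedAddCommGroup E] [NormedSpace ℝ E] [CompleteSpace E]

theorem enorm_sub_le_lintegral_deriv {u u' : ℝ → E} (hu : ∀ t, HasDerivAt u (u' t) t)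
    (hc : Continuous u') {ρ : ℝ} (hρ : 0 ≤ ρ) :
    ‖u ρ - u 0‖ₑ ≤ ∫⁻ t in Ioo 0 ρ, ‖u' t‖ₑ := by
  rw [← intervalIntegral.integral_eq_sub_of_hasDerivAt (fun t _ => hu t)
      (hc.intervalIntegrable 0 ρ), intervalIntegral.integral_of_le hρ,
    integral_Ioc_eq_integral_Ioo]
  exact enorm_integral_le_lintegral_enorm _

theorem enorm_sub_sq_le_lintegral_deriv_sq {u u' : ℝ → E} (hu : ∀ t, HasDerivAt u (u' t) t)
    (hc : Continuous u') : ‖u 1 - u 0‖ₑ ^ 2 ≤ ∫⁻ t in Ioo (0 : ℝ) 1, ‖u' t‖ₑ ^ 2 := by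
  have h := sq_lintegral_mul_le (μ := volume.restrict (Ioo (0 : ℝ) 1)) (f := fun _ => 1)
    aemeasurable_const hc.enorm.measurable.aemeasurable
  simp only [one_mul, one_pow, lintegral_one, Measure.restrict_apply_univ, Real.volume_Ioo,
    sub_zero, ENNReal.ofReal_one] at h
  exact (pow_le_pow_left' (enorm_sub_le_lintegral_deriv hu hc zero_le_one) 2).trans h

theorem enorm_sub_sq_le_weighted_lintegral_deriv_sq {u u' : ℝ → E}
    (hu : ∀ t, HasDerivAt u (u' t) t) (hc : Continuous u') {ρ : ℝ} (hρ : 0 ≤ ρ) :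
    ‖u ρ - u 0‖ₑ ^ 2 ≤ 2 * ENNReal.ofReal (√ρ) *
      ∫⁻ t in Ioo 0 ρ, ENNReal.ofReal (√t) * ‖u' t‖ₑ ^ 2 := by
  have hsplit : ∫⁻ t in Ioo 0 ρ, ‖u' t‖ₑ = ∫⁻ t in Ioo 0 ρ,
      ENNReal.ofReal (t ^ (-(1 / 4) : ℝ)) * (ENNReal.ofReal (t ^ (1 / 4 : ℝ)) * ‖u' t‖ₑ) := by
    refine setLIntegral_congr_fun measurableSet_Ioo fun t ht => ?_
    rw [← mul_assoc, ← ENNReal.ofReal_mul (Real.rpow_nonneg ht.1.le _), ← Real.rpow_add ht.1,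
      neg_add_cancel, Real.rpow_zero, ENNReal.ofReal_one, one_mul]
  have hweight : ∫⁻ t in Ioo 0 ρ, ENNReal.ofReal (t ^ (-(1 / 4) : ℝ)) ^ 2 =
      2 * ENNReal.ofReal (√ρ) := by
    calc ∫⁻ t in Ioo 0 ρ, ENNReal.ofReal (t ^ (-(1 / 4) : ℝ)) ^ 2
        = ∫⁻ t in Ioo 0 ρ, ENNReal.ofReal (t ^ (-(1 / 2) : ℝ)) := by
          refine setLIntegral_congr_fun measurableSet_Ioo fun t ht => ?_
          rw [← ENNReal.ofReal_pow (Real.rpow_nonneg ht.1.le _), ← Real.rpow_mul_natCast ht.1.le]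
          norm_num
      _ = 2 * ENNReal.ofReal (√ρ) := by
          rw [lintegral_Ioo_ofReal_rpow (by norm_num) hρ, ← ENNReal.ofReal_ofNat,
            ← ENNReal.ofReal_mul zero_le_two, Real.sqrt_eq_rpow]
          norm_num [div_eq_mul_inv, mul_comm]
  have henergy : ∫⁻ t in Ioo 0 ρ, (ENNReal.ofReal (t ^ (1 / 4 : ℝ)) * ‖u' t‖ₑ) ^ 2 =
      ∫⁻ t in Ioo 0 ρ, ENNReal.ofReal (√t) * ‖u' t‖ₑ ^ 2 := by
    refine setLIntegral_congr_fun measurableSet_Ioo fun t ht => ?_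
    rw [mul_pow, ← ENNReal.ofReal_pow (Real.rpow_nonneg ht.1.le _),
      ← Real.rpow_mul_natCast ht.1.le, Real.sqrt_eq_rpow]
    norm_num
  rw [← hweight, ← henergy]
  refine (pow_le_pow_left' ((enorm_sub_le_lintegral_deriv hu hc hρ).trans_eq hsplit) 2).trans ?_
  exact sq_lintegral_mul_le (by fun_prop)
    ((by fun_prop : Measurable fun t : ℝ => ENNReal.ofReal (t ^ (1 / 4 : ℝ))).mul
      hc.enorm.measurable).aemeasurable

theorem lintegral_mul_setLIntegral_Ioo {a b : ℝ} {w B : ℝ → ℝ≥0∞} (hw : Measurable w)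
    (hB : Measurable B) :
    ∫⁻ r in Ioo a b, w r * ∫⁻ t in Ioo a r, B t =
      ∫⁻ t in Ioo a b, (∫⁻ r in Ioo t b, w r) * B t := by
  have hinner (r) (hr : r ∈ Ioo a b) : w r * ∫⁻ t in Ioo a r, B t =
      ∫⁻ t in Ioo a b, {p : ℝ × ℝ | p.2 < p.1}.indicator (fun p => w p.1 * B p.2) (r, t) := by
    have hIoo : Ioo a r = Iio r ∩ Ioo a b := by
      rw [inter_comm, Ioo_inter_Iio, min_eq_right hr.2.le]
    rw [← lintegral_const_mul _ hB, hIoo, ← Measure.restrict_restrict measurableSet_Iio,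
      ← lintegral_indicator measurableSet_Iio]
    rfl
  have houter (t) (ht : t ∈ Ioo a b) : (∫⁻ r in Ioo t b, w r) * B t =
      ∫⁻ r in Ioo a b, {p : ℝ × ℝ | p.2 < p.1}.indicator (fun p => w p.1 * B p.2) (r, t) := by
    have hIoo : Ioo t b = Ioi t ∩ Ioo a b := by
      rw [Ioi_inter_Ioo, max_eq_left ht.1.le]
    rw [← lintegral_mul_const _ hw, hIoo, ← Measure.restrict_restrict measurableSet_Ioi,
      ← lintegral_indicator measurableSet_Ioi]
    rfl
  rw [setLIntegral_congr_fun measurableSet_Ioo hinner,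
    setLIntegral_congr_fun measurableSet_Ioo houter]
  refine lintegral_lintegral_swap (Measurable.aemeasurable ?_)
  exact ((hw.comp measurable_fst).mul (hB.comp measurable_snd)).indicator
    (measurableSet_lt measurable_snd measurable_fst)

theorem lintegral_rpow_mul_setLIntegral_le {A : ℝ → ℝ≥0∞} (hA : Measurable A) (b : ℝ) :
    ∫⁻ r in Ioo 0 b, ENNReal.ofReal (r ^ (-(3 / 2) : ℝ)) *
        ∫⁻ t in Ioo 0 r, ENNReal.ofReal (√t) * A t ≤ 2 * ∫⁻ t in Ioo 0 b, A t := by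
  rw [lintegral_mul_setLIntegral_Ioo (by fun_prop) (by fun_prop), ← lintegral_const_mul _ hA]
  refine setLIntegral_mono' measurableSet_Ioo fun t ht => ?_
  have htail : ∫⁻ r in Ioo t b, ENNReal.ofReal (r ^ (-(3 / 2) : ℝ)) ≤ ENNReal.ofReal (2 / √t) := by
    refine (lintegral_mono_set Ioo_subset_Ioi_self).trans_eq ?_
    rw [lintegral_Ioi_ofReal_rpow (by norm_num) ht.1, Real.sqrt_eq_rpow, div_eq_mul_inv 2,
      ← Real.rpow_neg ht.1.le]
    congr 1
    ring_nf
  calc (∫⁻ r in Ioo t b, ENNReal.ofReal (r ^ (-(3 / 2) : ℝ))) * (ENNReal.ofReal (√t) * A t)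
      ≤ ENNReal.ofReal (2 / √t) * (ENNReal.ofReal (√t) * A t) := by gcongr
    _ = 2 * A t := by
        rw [← mul_assoc, ← ENNReal.ofReal_mul (by positivity),
          div_mul_cancel₀ _ (Real.sqrt_pos.2 ht.1).ne', ENNReal.ofReal_ofNat]

end

section

variable {E F : Type*}

theorem Per3.comp {f : (Fin 3 → ℝ) → E} (hf : Per3 f) (φ : E → F) : Per3 fun y => φ (f y) :=
  fun y k => congrArg φ (hf y k)

theorem Per3.comp₂ {G : Type*} {f : (Fin 3 → ℝ) → E} {g : (Fin 3 → ℝ) → F} (hf : Per3 f)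
    (hg : Per3 g) (φ : E → F → G) : Per3 fun y => φ (f y) (g y) :=
  fun y k => congrArg₂ φ (hf y k) (hg y k)

theorem Per3.comp_ext3 {f : (Fin 3 → ℝ) → E} (hf : Per3 f) (z : ℝ) :
    Per2 fun x => f (ext3 x z) := by
  intro x k
  have hlift : ext3 (x + fun i => (k i : ℝ)) z = ext3 x z + lat3 k := by
    ext i
    fin_cases i <;> simp [ext3, lat3]
  simpa only [hlift] using hf (ext3 x z) k

theorem insertNth_two_eq_ext3 (x : Fin 2 → ℝ) (z : ℝ) :
    (Fin.insertNth (2 : Fin 3) z x : Fin 3 → ℝ) = ext3 x z := by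
  ext i
  fin_cases i
  exacts [Fin.insertNth_apply_succAbove (α := fun _ => ℝ) 2 z x 0,
    Fin.insertNth_apply_succAbove (α := fun _ => ℝ) 2 z x 1,
    Fin.insertNth_apply_same (α := fun _ => ℝ) 2 z x]

@[fun_prop]
theorem continuous_ext3 {α : Type*} [TopologicalSpace α] {f : α → Fin 2 → ℝ} {g : α → ℝ}
    (hf : Continuous f) (hg : Continuous g) : Continuous fun a => ext3 (f a) (g a) := by
  unfold ext3
  fun_prop

/-- The horizontal inclusion `𝕋² → 𝕋² × {0}`, as a linear map. -/
def horizontalCLM : (Fin 2 → ℝ) →L[ℝ] (Fin 3 → ℝ) :=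
  ContinuousLinearMap.pi ![.proj 0, .proj 1, 0]

theorem ext3_eq_horizontalCLM_add (x : Fin 2 → ℝ) (z : ℝ) :
    ext3 x z = horizontalCLM x + Pi.single 2 z := by
  ext i
  fin_cases i <;> simp [ext3, horizontalCLM]

theorem enorm_horizontalCLM_le : ‖horizontalCLM‖ₑ ≤ 1 := by
  rw [← ofReal_norm, ENNReal.ofReal_le_one]
  refine ContinuousLinearMap.opNorm_le_bound _ zero_le_one fun h => ?_
  rw [one_mul, pi_norm_le_iff_of_nonneg (norm_nonneg h)]
  intro i
  fin_cases i
  exacts [norm_le_pi_norm h 0, norm_le_pi_norm h 1, by simp [horizontalCLM]]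

theorem horizontalCLM_single (j : Fin 2) :
    horizontalCLM (Pi.single j 1) = Pi.single j.castSucc 1 := by
  ext i
  fin_cases j <;> fin_cases i <;> simp [horizontalCLM]

theorem hasFDerivAt_ext3 (x : Fin 2 → ℝ) (z : ℝ) :
    HasFDerivAt (fun x => ext3 x z) horizontalCLM x := by
  simp only [ext3_eq_horizontalCLM_add]
  exact horizontalCLM.hasFDerivAt.add_const _

theorem measurableSet_Q3 : MeasurableSet Q3 := by
  have hcoord (i : Fin 3) (a b : ℝ) : MeasurableSet {y : Fin 3 → ℝ | y i ∈ Ioo a b} :=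
    measurable_pi_apply i measurableSet_Ioo
  exact (hcoord 0 0 1).inter ((hcoord 1 0 1).inter (hcoord 2 (-1) 1))

theorem setLIntegral_Q3_eq {G : (Fin 3 → ℝ) → ℝ≥0∞} (hG : Measurable G) :
    ∫⁻ y in Q3, G y = ∫⁻ z in Ioo (-1 : ℝ) 1, ∫⁻ x in Q2, G (ext3 x z) := by
  set e := (MeasurableEquiv.piFinSuccAbove (fun _ : Fin 3 => ℝ) 2).symm
  have he (p : ℝ × (Fin 2 → ℝ)) : e p = ext3 p.2 p.1 := insertNth_two_eq_ext3 p.2 p.1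
  have hpreimage : e ⁻¹' Q3 = Ioo (-1 : ℝ) 1 ×ˢ Q2 := by
    ext p
    rw [mem_preimage, he]
    simp only [Q3, Q2, ext3, mem_prod, mem_univ_pi, Fin.forall_fin_two, mem_ofPred_eq,
      Matrix.cons_val]
    tauto
  have hmp : MeasurePreserving e := (volume_preserving_piFinSuccAbove _ 2).symm
  rw [← hmp.setLIntegral_comp_preimage measurableSet_Q3 hG, hpreimage, Measure.volume_eq_prod,
    ← Measure.prod_restrict, lintegral_prod _ (by fun_prop)]
  simp only [he]

theorem lintegral_Ioo_lintegral_ext3_le {G : (Fin 3 → ℝ) → ℝ≥0∞} (hG : Measurable G) {ε : ℝ}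
    (hε : ε = 1 ∨ ε = -1) :
    ∫⁻ t in Ioo (0 : ℝ) 1, ∫⁻ x in Q2, G (ext3 x (ε * (1 - t))) ≤ ∫⁻ y in Q3, G y := by
  have hmeas : Measurable fun z => ∫⁻ x in Q2, G (ext3 x z) :=
    Measurable.lintegral_prod_right' (f := fun p : ℝ × (Fin 2 → ℝ) => G (ext3 p.2 p.1))
      (hG.comp (by fun_prop : Continuous _).measurable)
  have hmp : MeasurePreserving (fun t : ℝ => ε * (1 - t)) volume volume := by
    rcases hε with rfl | rfl
    · simpa only [one_mul] using Measure.measurePreserving_sub_left (volume : Measure ℝ) 1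
    · simpa only [neg_one_mul, neg_sub] using measurePreserving_sub_right (volume : Measure ℝ) 1
  have hsub : Ioo (0 : ℝ) 1 ⊆ (fun t : ℝ => ε * (1 - t)) ⁻¹' Ioo (-1) 1 := by
    rintro t ⟨ht₀, ht₁⟩
    rcases hε with rfl | rfl <;> constructor <;> linarith
  rw [setLIntegral_Q3_eq hG, ← hmp.setLIntegral_comp_preimage measurableSet_Ioo hmeas]
  exact lintegral_mono_set hsub

end

section

variable {E : Type*} [NormedAddCommGroup E] [NormedSpace ℝ E]

theorem per2_fderiv {f : (Fin 2 → ℝ) → E} (hf : Per2 f) : Per2 (fderiv ℝ f) := by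
  intro x k
  rw [← fderiv_comp_add_right, show (fun x => f (x + fun i => (k i : ℝ))) = f from
    funext fun x => hf x k]

theorem per3_fderiv {f : (Fin 3 → ℝ) → E} (hf : Per3 f) : Per3 (fderiv ℝ f) := by
  intro y k
  rw [← fderiv_comp_add_right, show (fun y => f (y + lat3 k)) = f from funext fun y => hf y k]

theorem fderiv_comp_ext3 {f : (Fin 3 → ℝ) → E} (hf : Differentiable ℝ f) (x : Fin 2 → ℝ) (z : ℝ) :
    fderiv ℝ (fun x => f (ext3 x z)) x = (fderiv ℝ f (ext3 x z)).comp horizontalCLM :=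
  ((hf _).hasFDerivAt.comp x (hasFDerivAt_ext3 x z)).fderiv

theorem contDiff_comp_ext3 {n : WithTop ℕ∞} {f : (Fin 3 → ℝ) → E} (hf : ContDiff ℝ n f) (z : ℝ) :
    ContDiff ℝ n fun x => f (ext3 x z) := by
  simp only [ext3_eq_horizontalCLM_add]
  exact hf.comp (horizontalCLM.contDiff.add contDiff_const)

theorem enorm_clm_apply_sq_le {V : Type*} [NormedAddCommGroup V] [NormedSpace ℝ V]
    (L : V →L[ℝ] E) (v : V) : ‖L v‖ₑ ^ 2 ≤ ‖v‖ₑ ^ 2 * ‖L‖ₑ ^ 2 := by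
  rw [mul_comm, ← mul_pow]
  exact pow_le_pow_left' (L.le_opENorm v) 2

theorem Per2.l2ModulusSq_le_mul_lintegral_fderiv_sq [CompleteSpace E] {f : (Fin 2 → ℝ) → E}
    (hf : Per2 f) (hc : ContDiff ℝ 1 f) (h : Fin 2 → ℝ) :
    l2ModulusSq f h ≤ ‖h‖ₑ ^ 2 * ∫⁻ x in Q2, ‖fderiv ℝ f x‖ₑ ^ 2 := by
  have : Continuous (fderiv ℝ f) := hc.continuous_fderiv one_ne_zero
  have hpoint (x : Fin 2 → ℝ) : ‖f (x + h) - f x‖ₑ ^ 2 ≤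
      ‖h‖ₑ ^ 2 * ∫⁻ t in Ioo (0 : ℝ) 1, ‖fderiv ℝ f (x + t • h)‖ₑ ^ 2 := by
    have hu (t : ℝ) : HasDerivAt (fun t : ℝ => f (x + t • h))
        (fderiv ℝ f (x + t • h) h) t :=
      (hc.differentiable one_ne_zero _).hasFDerivAt.comp_hasDerivAt t
        (by simpa only [one_smul, id] using ((hasDerivAt_id t).smul_const h).const_add x)
    have hftc := enorm_sub_sq_le_lintegral_deriv_sq hu (by fun_prop)
    simp only [one_smul, zero_smul, add_zero] at hftc
    rw [← lintegral_const_mul _ (by fun_prop)]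
    exact hftc.trans (lintegral_mono fun t => enorm_clm_apply_sq_le _ h)
  have hmeas : Measurable fun p : (Fin 2 → ℝ) × ℝ =>
      ‖fderiv ℝ f (p.1 + p.2 • h)‖ₑ ^ 2 := by fun_prop
  have htranslate (t : ℝ) : ∫⁻ x in Q2, ‖fderiv ℝ f (x + t • h)‖ₑ ^ 2 =
      ∫⁻ x in Q2, ‖fderiv ℝ f x‖ₑ ^ 2 :=
    ((per2_fderiv hf).comp fun L => ‖L‖ₑ ^ 2).setLIntegral_comp_add_right (t • h)
  refine (lintegral_mono hpoint).trans_eq ?_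
  rw [lintegral_const_mul _ hmeas.lintegral_prod_right',
    lintegral_lintegral_swap hmeas.aemeasurable]
  simp only [htranslate, lintegral_const, Measure.restrict_apply_univ, Real.volume_Ioo, sub_zero,
    ENNReal.ofReal_one, mul_one]

variable {f : (Fin 3 → ℝ) → E} {ε : ℝ}

/-- The squared `L²` norm of the gradient of `f` over the horizontal slice of `𝕋² × (−1, 1)` at
distance `t` from the boundary component `𝕋² × {ε}`. -/
def sliceEnergy (f : (Fin 3 → ℝ) → E) (ε t : ℝ) : ℝ≥0∞ :=
  ∫⁻ x in Q2, ‖fderiv ℝ f (ext3 x (ε * (1 - t)))‖ₑ ^ 2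

theorem measurable_sliceEnergy (hf : ContDiff ℝ 1 f) (ε : ℝ) : Measurable (sliceEnergy f ε) := by
  have : Continuous (fderiv ℝ f) := hf.continuous_fderiv one_ne_zero
  exact Measurable.lintegral_prod_right' (f := fun p : ℝ × (Fin 2 → ℝ) =>
    ‖fderiv ℝ f (ext3 p.2 (ε * (1 - p.1)))‖ₑ ^ 2) (by fun_prop)

theorem lintegral_sliceEnergy_le (hf : ContDiff ℝ 1 f) (hε : ε = 1 ∨ ε = -1) :
    ∫⁻ t in Ioo (0 : ℝ) 1, sliceEnergy f ε t ≤ ∫⁻ y in Q3, ‖fderiv ℝ f y‖ₑ ^ 2 := by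
  have : Continuous (fderiv ℝ f) := hf.continuous_fderiv one_ne_zero
  exact lintegral_Ioo_lintegral_ext3_le (G := fun y => ‖fderiv ℝ f y‖ₑ ^ 2) (by fun_prop) hε

theorem l2ModulusSq_slice_le [CompleteSpace E] (hf : ContDiff ℝ 1 f) (hper : Per3 f) (ε t : ℝ)
    (h : Fin 2 → ℝ) :
    l2ModulusSq (fun x => f (ext3 x (ε * (1 - t)))) h ≤ ‖h‖ₑ ^ 2 * sliceEnergy f ε t := by
  refine ((hper.comp_ext3 _).l2ModulusSq_le_mul_lintegral_fderiv_sq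
    (contDiff_comp_ext3 hf _) h).trans ?_
  refine mul_le_mul_right (lintegral_mono fun x => pow_le_pow_left' ?_ 2) _
  rw [fderiv_comp_ext3 (hf.differentiable one_ne_zero)]
  refine (ContinuousLinearMap.opENorm_comp_le _ _).trans ?_
  exact mul_le_of_le_one_right' enorm_horizontalCLM_le

theorem hasDerivAt_comp_ext3_vertical (hf : Differentiable ℝ f) (x : Fin 2 → ℝ) (ε t : ℝ) :
    HasDerivAt (fun t => f (ext3 x (ε * (1 - t))))
      (fderiv ℝ f (ext3 x (ε * (1 - t))) (Pi.single 2 (-ε))) t := by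
  simp only [ext3_eq_horizontalCLM_add]
  have hheight : HasDerivAt (fun t : ℝ => ε * (1 - t)) (-ε) t := by
    simpa only [mul_neg_one, id] using ((hasDerivAt_id t).const_sub 1).const_mul ε
  exact (hf _).hasFDerivAt.comp_hasDerivAt t
    (((ContinuousLinearMap.single ℝ (fun _ : Fin 3 => ℝ) 2).hasFDerivAt.comp_hasDerivAt t
      hheight).const_add _)

theorem lintegral_enorm_slice_sub_trace_sq_le [CompleteSpace E] (hf : ContDiff ℝ 1 f)
    (hε : ε = 1 ∨ ε = -1) {ρ : ℝ} (hρ : 0 ≤ ρ) :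
    ∫⁻ x in Q2, ‖f (ext3 x (ε * (1 - ρ))) - f (ext3 x ε)‖ₑ ^ 2 ≤
      2 * ENNReal.ofReal (√ρ) * ∫⁻ t in Ioo 0 ρ, ENNReal.ofReal (√t) * sliceEnergy f ε t := by
  have : Continuous (fderiv ℝ f) := hf.continuous_fderiv one_ne_zero
  have hunit : ‖(Pi.single 2 (-ε) : Fin 3 → ℝ)‖ₑ = 1 := by
    rcases hε with rfl | rfl <;> simp [enorm_eq_nnnorm, Pi.nnnorm_single]
  have hpoint (x : Fin 2 → ℝ) : ‖f (ext3 x (ε * (1 - ρ))) - f (ext3 x ε)‖ₑ ^ 2 ≤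
      2 * ENNReal.ofReal (√ρ) * ∫⁻ t in Ioo 0 ρ,
        ENNReal.ofReal (√t) * ‖fderiv ℝ f (ext3 x (ε * (1 - t)))‖ₑ ^ 2 := by
    have hftc := enorm_sub_sq_le_weighted_lintegral_deriv_sq
      (hasDerivAt_comp_ext3_vertical (hf.differentiable one_ne_zero) x ε) (by fun_prop) hρ
    rw [sub_zero, mul_one] at hftc
    refine hftc.trans ?_
    gcongr with t
    simpa only [hunit, mul_one] using
      (fderiv ℝ f (ext3 x (ε * (1 - t)))).le_opENorm (Pi.single 2 (-ε))
  have hmeas : Measurable fun p : (Fin 2 → ℝ) × ℝ =>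
      ENNReal.ofReal (√p.2) * ‖fderiv ℝ f (ext3 p.1 (ε * (1 - p.2)))‖ₑ ^ 2 := by fun_prop
  refine (lintegral_mono hpoint).trans_eq ?_
  rw [lintegral_const_mul _ hmeas.lintegral_prod_right',
    lintegral_lintegral_swap hmeas.aemeasurable]
  dsimp only
  congr 1
  refine lintegral_congr fun t => ?_
  rw [sliceEnergy, lintegral_const_mul _ (by fun_prop)]

theorem l2ModulusSq_trace_le [CompleteSpace E] (hf : ContDiff ℝ 1 f) (hper : Per3 f)
    (hε : ε = 1 ∨ ε = -1) (h : Fin 2 → ℝ) :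
    l2ModulusSq (fun x => f (ext3 x ε)) h ≤ 2 * (ENNReal.ofReal (‖h‖ ^ 2) * sliceEnergy f ε ‖h‖) +
      16 * (ENNReal.ofReal (√‖h‖) *
        ∫⁻ t in Ioo 0 ‖h‖, ENNReal.ofReal (√t) * sliceEnergy f ε t) := by
  set slice : (Fin 2 → ℝ) → E := fun x => f (ext3 x (ε * (1 - ‖h‖)))
  set gap : (Fin 2 → ℝ) → E := fun x => f (ext3 x ε) - slice x
  have hcf := hf.continuous
  have cslice : Continuous slice := by fun_prop
  have cgap : Continuous gap := by fun_prop
  have hgap : ∫⁻ x in Q2, ‖gap x‖ₑ ^ 2 ≤ 2 * ENNReal.ofReal (√‖h‖) *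
      ∫⁻ t in Ioo 0 ‖h‖, ENNReal.ofReal (√t) * sliceEnergy f ε t := by
    simp only [gap, enorm_sub_rev (f _)]
    exact lintegral_enorm_slice_sub_trace_sq_le hf hε (norm_nonneg h)
  have hslice : l2ModulusSq slice h ≤ ENNReal.ofReal (‖h‖ ^ 2) * sliceEnergy f ε ‖h‖ := by
    rw [ENNReal.ofReal_pow (norm_nonneg h), ofReal_norm]
    exact l2ModulusSq_slice_le hf hper ε ‖h‖ h
  calc l2ModulusSq (fun x => f (ext3 x ε)) h
      = l2ModulusSq (fun x => slice x + gap x) h := by simp only [gap, add_sub_cancel]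
    _ ≤ 2 * l2ModulusSq slice h + 2 * l2ModulusSq gap h := l2ModulusSq_fun_add_le cslice h
    _ ≤ 2 * l2ModulusSq slice h + 2 * (4 * ∫⁻ x in Q2, ‖gap x‖ₑ ^ 2) := by
        gcongr
        exact ((hper.comp_ext3 _).comp₂ (hper.comp_ext3 _) (· - ·)).l2ModulusSq_le_four_mul cgap h
    _ ≤ 2 * (ENNReal.ofReal (‖h‖ ^ 2) * sliceEnergy f ε ‖h‖) + 2 * (4 * (2 * ENNReal.ofReal (√‖h‖) *
          ∫⁻ t in Ioo 0 ‖h‖, ENNReal.ofReal (√t) * sliceEnergy f ε t)) := by gcongr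
    _ = _ := by ring

end

section

variable {E : Type*} [NormedAddCommGroup E] [NormedSpace ℝ E] {f : (Fin 3 → ℝ) → E} {ε : ℝ}

theorem setLIntegral_ball_norm_div_pow_three {ψ : ℝ → ℝ≥0∞} (hψ : Measurable ψ) (R : ℝ) :
    ∫⁻ h : Fin 2 → ℝ in Metric.ball 0 R, ψ ‖h‖ / ENNReal.ofReal (‖h‖ ^ 3) =
      8 * ∫⁻ r in Ioo 0 R, ψ r / ENNReal.ofReal (r ^ 2) := by
  have hjacobian (r : ℝ) (hr : r ∈ Ioo 0 R) : ENNReal.ofReal r * (ψ r / ENNReal.ofReal (r ^ 3)) =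
      ψ r / ENNReal.ofReal (r ^ 2) := by
    have hr₀ : ENNReal.ofReal r ≠ 0 := (ENNReal.ofReal_pos.2 hr.1).ne'
    rw [pow_succ' r 2, ENNReal.ofReal_mul hr.1.le, ← mul_div_assoc,
      ENNReal.mul_div_mul_left _ _ hr₀ ENNReal.ofReal_ne_top]
  rw [setLIntegral_ball_fun_norm_addHaar volume (ψ := fun r => ψ r / ENNReal.ofReal (r ^ 3))
    (hψ.div (by fun_prop)), Real.volume_pi_ball _ one_pos, Module.finrank_fin_fun,
    ← setLIntegral_congr_fun measurableSet_Ioo hjacobian]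
  norm_num

theorem ofReal_sq_mul_add_ofReal_sqrt_mul_div {r : ℝ} (hr : 0 < r) (a b : ℝ≥0∞) :
    (ENNReal.ofReal (r ^ 2) * a + ENNReal.ofReal (√r) * b) / ENNReal.ofReal (r ^ 2) =
      a + ENNReal.ofReal (r ^ (-(3 / 2) : ℝ)) * b := by
  have hr₀ : ENNReal.ofReal (r ^ 2) ≠ 0 := (ENNReal.ofReal_pos.2 (pow_pos hr 2)).ne'
  have hpow : ENNReal.ofReal (√r) / ENNReal.ofReal (r ^ 2) =
      ENNReal.ofReal (r ^ (-(3 / 2) : ℝ)) := by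
    rw [← ENNReal.ofReal_div_of_pos (pow_pos hr 2), Real.sqrt_eq_rpow, ← Real.rpow_natCast,
      ← Real.rpow_sub hr]
    norm_num
  rw [ENNReal.add_div, mul_comm (ENNReal.ofReal (r ^ 2)) a,
    ENNReal.mul_div_cancel_right hr₀ ENNReal.ofReal_ne_top, ENNReal.mul_div_right_comm, hpow]

theorem gagliardo2Sq_trace_le [CompleteSpace E] (hf : ContDiff ℝ 1 f) (hper : Per3 f)
    (hε : ε = 1 ∨ ε = -1) :
    gagliardo2Sq (1 / 2) (fun x => f (ext3 x ε)) ≤ 272 * ∫⁻ y in Q3, ‖fderiv ℝ f y‖ₑ ^ 2 := by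
  set A := sliceEnergy f ε
  have hA : Measurable A := measurable_sliceEnergy hf ε
  set I : ℝ → ℝ≥0∞ := fun r => ∫⁻ t in Ioo 0 r, ENNReal.ofReal (√t) * A t
  have hI : Measurable I :=
    Monotone.measurable fun a b hab => lintegral_mono_set (Ioo_subset_Ioo_right hab)
  have hc : Continuous fun x => f (ext3 x ε) := (contDiff_comp_ext3 hf ε).continuous
  have hweight (r : ℝ) (hr : r ∈ Ioo (0 : ℝ) (1 / 2)) :
      (2 * (ENNReal.ofReal (r ^ 2) * A r) + 16 * (ENNReal.ofReal (√r) * I r)) /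
        ENNReal.ofReal (r ^ 2) = 2 * A r + 16 * (ENNReal.ofReal (r ^ (-(3 / 2) : ℝ)) * I r) := by
    rw [mul_left_comm 2, mul_left_comm 16, ofReal_sq_mul_add_ofReal_sqrt_mul_div hr.1,
      mul_left_comm 16]
  calc gagliardo2Sq (1 / 2) (fun x => f (ext3 x ε))
      = ∫⁻ h in Metric.ball 0 (1 / 2), l2ModulusSq (fun x => f (ext3 x ε)) h /
          ENNReal.ofReal (‖h‖ ^ 3) := by
        rw [(hper.comp_ext3 ε).gagliardo2Sq_eq_lintegral_l2ModulusSq hc]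
        simp only [show (2 + 2 * (1 / 2) : ℝ) = (3 : ℕ) by norm_num, Real.rpow_natCast]
    _ ≤ ∫⁻ h : Fin 2 → ℝ in Metric.ball 0 (1 / 2),
          (2 * (ENNReal.ofReal (‖h‖ ^ 2) * A ‖h‖) + 16 * (ENNReal.ofReal (√‖h‖) * I ‖h‖)) /
            ENNReal.ofReal (‖h‖ ^ 3) := by
        gcongr with h
        exact l2ModulusSq_trace_le hf hper hε h
    _ = 8 * ∫⁻ r in Ioo (0 : ℝ) (1 / 2),
          (2 * A r + 16 * (ENNReal.ofReal (r ^ (-(3 / 2) : ℝ)) * I r)) := by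
        rw [setLIntegral_ball_norm_div_pow_three (ψ := fun r =>
          2 * (ENNReal.ofReal (r ^ 2) * A r) + 16 * (ENNReal.ofReal (√r) * I r)) (by fun_prop),
          setLIntegral_congr_fun measurableSet_Ioo hweight]
    _ ≤ 8 * (2 * (∫⁻ r in Ioo (0 : ℝ) (1 / 2), A r) +
          16 * (2 * ∫⁻ r in Ioo (0 : ℝ) (1 / 2), A r)) := by
        rw [lintegral_add_left (by fun_prop), lintegral_const_mul _ hA,
          lintegral_const_mul _ (by fun_prop)]
        gcongr
        exact lintegral_rpow_mul_setLIntegral_le hA _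
    _ = 272 * ∫⁻ r in Ioo (0 : ℝ) (1 / 2), A r := by ring
    _ ≤ 272 * ∫⁻ y in Q3, ‖fderiv ℝ f y‖ₑ ^ 2 := by
        gcongr
        exact (lintegral_mono_set (Ioo_subset_Ioo_right (by norm_num))).trans
          (lintegral_sliceEnergy_le hf hε)

theorem lintegral_enorm_slice_sub_trace_sq_le_two_mul [CompleteSpace E] (hf : ContDiff ℝ 1 f)
    (hε : ε = 1 ∨ ε = -1) {t : ℝ} (ht : t ∈ Ioo (0 : ℝ) 1) :
    ∫⁻ x in Q2, ‖f (ext3 x (ε * (1 - t))) - f (ext3 x ε)‖ₑ ^ 2 ≤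
      2 * ∫⁻ y in Q3, ‖fderiv ℝ f y‖ₑ ^ 2 := by
  have hsqrt {r : ℝ} (hr : r < 1) : ENNReal.ofReal (√r) ≤ 1 := by
    rw [ENNReal.ofReal_le_one, Real.sqrt_le_one]
    exact hr.le
  calc ∫⁻ x in Q2, ‖f (ext3 x (ε * (1 - t))) - f (ext3 x ε)‖ₑ ^ 2
      ≤ 2 * ENNReal.ofReal (√t) * ∫⁻ r in Ioo 0 t, ENNReal.ofReal (√r) * sliceEnergy f ε r :=
        lintegral_enorm_slice_sub_trace_sq_le hf hε ht.1.le
    _ ≤ 2 * 1 * ∫⁻ r in Ioo 0 t, 1 * sliceEnergy f ε r :=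
        mul_le_mul' (mul_le_mul_right (hsqrt ht.2) 2) (setLIntegral_mono' measurableSet_Ioo
          fun r hr => mul_le_mul_left (hsqrt (hr.2.trans ht.2)) _)
    _ ≤ 2 * ∫⁻ y in Q3, ‖fderiv ℝ f y‖ₑ ^ 2 := by
        simp only [mul_one, one_mul]
        gcongr
        exact (lintegral_mono_set (Ioo_subset_Ioo_right ht.2.le)).trans
          (lintegral_sliceEnergy_le hf hε)

theorem lintegral_enorm_trace_sq_le [CompleteSpace E] (hf : ContDiff ℝ 1 f)
    (hε : ε = 1 ∨ ε = -1) :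
    ∫⁻ x in Q2, ‖f (ext3 x ε)‖ₑ ^ 2 ≤
      2 * (∫⁻ y in Q3, ‖f y‖ₑ ^ 2) + 4 * ∫⁻ y in Q3, ‖fderiv ℝ f y‖ₑ ^ 2 := by
  have hcf := hf.continuous
  set Z := ∫⁻ y in Q3, ‖fderiv ℝ f y‖ₑ ^ 2
  have hmeas : Measurable fun t => ∫⁻ x in Q2, ‖f (ext3 x (ε * (1 - t)))‖ₑ ^ 2 :=
    Measurable.lintegral_prod_right' (f := fun p : ℝ × (Fin 2 → ℝ) =>
      ‖f (ext3 p.2 (ε * (1 - p.1)))‖ₑ ^ 2) (by fun_prop : Continuous _).measurable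
  have hslice (t : ℝ) (ht : t ∈ Ioo (0 : ℝ) 1) : ∫⁻ x in Q2, ‖f (ext3 x ε)‖ₑ ^ 2 ≤
      2 * (∫⁻ x in Q2, ‖f (ext3 x (ε * (1 - t)))‖ₑ ^ 2) + 4 * Z := by
    calc ∫⁻ x in Q2, ‖f (ext3 x ε)‖ₑ ^ 2
        = ∫⁻ x in Q2, ‖f (ext3 x (ε * (1 - t))) +
            -(f (ext3 x (ε * (1 - t))) - f (ext3 x ε))‖ₑ ^ 2 := by
          simp only [← sub_eq_add_neg, sub_sub_cancel]
      _ ≤ 2 * (∫⁻ x in Q2, ‖f (ext3 x (ε * (1 - t)))‖ₑ ^ 2) + 2 * (2 * Z) := by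
          refine (lintegral_enorm_add_sq_le
            (by fun_prop : Continuous fun x => f (ext3 x (ε * (1 - t)))).aestronglyMeasurable
            _).trans ?_
          simp only [enorm_neg]
          gcongr
          exact lintegral_enorm_slice_sub_trace_sq_le_two_mul hf hε ht
      _ = _ := by ring
  calc ∫⁻ x in Q2, ‖f (ext3 x ε)‖ₑ ^ 2
      = ∫⁻ _ in Ioo (0 : ℝ) 1, ∫⁻ x in Q2, ‖f (ext3 x ε)‖ₑ ^ 2 := by
        simp only [lintegral_const, Measure.restrict_apply_univ, Real.volume_Ioo, sub_zero,
          ENNReal.ofReal_one, mul_one]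
    _ ≤ ∫⁻ t in Ioo (0 : ℝ) 1, (2 * (∫⁻ x in Q2, ‖f (ext3 x (ε * (1 - t)))‖ₑ ^ 2) + 4 * Z) :=
        setLIntegral_mono' measurableSet_Ioo hslice
    _ = 2 * (∫⁻ t in Ioo (0 : ℝ) 1, ∫⁻ x in Q2, ‖f (ext3 x (ε * (1 - t)))‖ₑ ^ 2) + 4 * Z := by
        rw [lintegral_add_left (by fun_prop), lintegral_const_mul _ hmeas]
        simp only [lintegral_const, Measure.restrict_apply_univ, Real.volume_Ioo, sub_zero,
          ENNReal.ofReal_one, mul_one]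
    _ ≤ 2 * (∫⁻ y in Q3, ‖f y‖ₑ ^ 2) + 4 * Z := by
        gcongr
        exact lintegral_Ioo_lintegral_ext3_le (G := fun y => ‖f y‖ₑ ^ 2)
          (by fun_prop : Continuous _).measurable hε

theorem HOmega3n_sq (n : ℕ) (f : (Fin 3 → ℝ) → E) :
    HOmega3n n f ^ 2 = ∑ k ∈ Finset.range (n + 1), ∫⁻ y in Q3, ‖iteratedFDeriv ℝ k f y‖ₑ ^ 2 := by
  rw [HOmega3n, ← ENNReal.rpow_mul_natCast]
  norm_num
  rfl

theorem enorm_iteratedFDeriv_zero {V : Type*} [NormedAddCommGroup V] [NormedSpace ℝ V] (f : V → E)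
    (x : V) : ‖iteratedFDeriv ℝ 0 f x‖ₑ = ‖f x‖ₑ :=
  enorm_eq_iff_norm_eq.2 norm_iteratedFDeriv_zero

theorem enorm_iteratedFDeriv_one {V : Type*} [NormedAddCommGroup V] [NormedSpace ℝ V] (f : V → E)
    (x : V) : ‖iteratedFDeriv ℝ 1 f x‖ₑ = ‖fderiv ℝ f x‖ₑ :=
  enorm_eq_iff_norm_eq.2 (norm_iteratedFDeriv_one f)

theorem HOmega3n_zero_sq (f : (Fin 3 → ℝ) → E) : HOmega3n 0 f ^ 2 = ∫⁻ y in Q3, ‖f y‖ₑ ^ 2 := by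
  simp only [HOmega3n_sq, zero_add, Finset.sum_range_one, enorm_iteratedFDeriv_zero]

theorem HOmega3n_one_sq (f : (Fin 3 → ℝ) → E) :
    HOmega3n 1 f ^ 2 = HOmega3n 0 f ^ 2 + ∫⁻ y in Q3, ‖fderiv ℝ f y‖ₑ ^ 2 := by
  simp only [HOmega3n_sq, Finset.sum_range_succ, Finset.sum_range_zero, zero_add,
    enorm_iteratedFDeriv_one]

theorem HGamma2_sq (σ : ℝ) (w : (Fin 2 → ℝ) → ℝ) : HGamma2 σ w ^ 2 =
    (∑ k ∈ Finset.range (⌊σ⌋₊ + 1), ∫⁻ x in Q2, ‖iteratedFDeriv ℝ k w x‖ₑ ^ 2) +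
      if σ = (⌊σ⌋₊ : ℝ) then 0 else gagliardo2Sq (σ - ⌊σ⌋₊) (iteratedFDeriv ℝ ⌊σ⌋₊ w) := by
  rw [HGamma2, ← ENNReal.rpow_mul_natCast]
  norm_num
  rfl

theorem HGamma2_one_half_sq (w : (Fin 2 → ℝ) → ℝ) :
    HGamma2 (1 / 2) w ^ 2 = (∫⁻ x in Q2, ‖w x‖ₑ ^ 2) + gagliardo2Sq (1 / 2) w := by
  have hfloor : ⌊(1 / 2 : ℝ)⌋₊ = 0 := Nat.floor_eq_zero.2 one_half_lt_one
  have hdiff (x y : Fin 2 → ℝ) :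
      ‖iteratedFDeriv ℝ 0 w x - iteratedFDeriv ℝ 0 w y‖₊ = ‖w x - w y‖₊ := by
    simp only [iteratedFDeriv_zero_eq_comp, Function.comp, ← map_sub,
      LinearIsometryEquiv.nnnorm_map]
  have hgag : gagliardo2Sq (1 / 2) (iteratedFDeriv ℝ 0 w) = gagliardo2Sq (1 / 2) w := by
    simp only [gagliardo2Sq, hdiff]
  rw [HGamma2_sq, hfloor, if_neg (by norm_num)]
  simp only [zero_add, Finset.sum_range_one, enorm_iteratedFDeriv_zero, Nat.cast_zero, sub_zero,
    hgag]

theorem HGamma2_one_half_trace_le {f : (Fin 3 → ℝ) → ℝ} (hf : ContDiff ℝ 1 f) (hper : Per3 f)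
    (hε : ε = 1 ∨ ε = -1) : HGamma2 (1 / 2) (fun x => f (ext3 x ε)) ≤ 17 * HOmega3n 1 f := by
  rw [← ENNReal.pow_le_pow_left_iff two_ne_zero, mul_pow, HGamma2_one_half_sq, HOmega3n_one_sq,
    HOmega3n_zero_sq]
  calc (∫⁻ x in Q2, ‖f (ext3 x ε)‖ₑ ^ 2) + gagliardo2Sq (1 / 2) (fun x => f (ext3 x ε))
      ≤ (2 * (∫⁻ y in Q3, ‖f y‖ₑ ^ 2) + 4 * ∫⁻ y in Q3, ‖fderiv ℝ f y‖ₑ ^ 2) +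
          272 * ∫⁻ y in Q3, ‖fderiv ℝ f y‖ₑ ^ 2 :=
        add_le_add (lintegral_enorm_trace_sq_le hf hε) (gagliardo2Sq_trace_le hf hper hε)
    _ = 2 * (∫⁻ y in Q3, ‖f y‖ₑ ^ 2) + 276 * ∫⁻ y in Q3, ‖fderiv ℝ f y‖ₑ ^ 2 := by ring
    _ ≤ 17 ^ 2 * (∫⁻ y in Q3, ‖f y‖ₑ ^ 2) + 17 ^ 2 * ∫⁻ y in Q3, ‖fderiv ℝ f y‖ₑ ^ 2 := by
        gcongr <;> norm_num
    _ = _ := (mul_add _ _ _).symm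

end

/-! ### Null Lagrangians -/

section

variable {E : Type*} [NormedAddCommGroup E] [NormedSpace ℝ E]

theorem contDiff_pderiv {n : ℕ} {m k : WithTop ℕ∞} {f : (Fin n → ℝ) → E} (hf : ContDiff ℝ k f)
    (hmk : m + 1 ≤ k) (i : Fin n) : ContDiff ℝ m (pderiv i f) :=
  (hf.fderiv_right hmk).clm_apply contDiff_const

theorem per3_pderiv {f : (Fin 3 → ℝ) → E} (hf : Per3 f) (i : Fin 3) : Per3 (pderiv i f) :=
  (per3_fderiv hf).comp fun L => L (Pi.single i 1)

theorem setIntegral_Icc_pderiv {n : ℕ} {a b : Fin (n + 1) → ℝ} (hab : a ≤ b)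
    {g : (Fin (n + 1) → ℝ) → E} (hg : ContDiff ℝ 1 g) (j : Fin (n + 1)) :
    ∫ y in Icc a b, pderiv j g y =
      (∫ x in Icc (a ∘ j.succAbove) (b ∘ j.succAbove), g (j.insertNth (b j) x)) -
        ∫ x in Icc (a ∘ j.succAbove) (b ∘ j.succAbove), g (j.insertNth (a j) x) := by
  have hdiv (y : Fin (n + 1) → ℝ) :
      ∑ i, (Pi.single j (fderiv ℝ g y) : Fin (n + 1) → _ →L[ℝ] E) i (Pi.single i 1) =
        pderiv j g y := by
    rw [Finset.sum_eq_single j (fun i _ hi => by simp [hi]) (by simp), Pi.single_eq_same, pderiv]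
  have hparts := integral_divergence_of_hasFDerivAt_off_countable' a b hab (Pi.single j g)
    (fun i y => (Pi.single j (fderiv ℝ g y) : Fin (n + 1) → _ →L[ℝ] E) i) ∅ countable_empty
    (fun i => ?_) (fun y _ i => ?_) ?_
  · simp only [hdiv] at hparts
    rw [hparts, Finset.sum_eq_single j (fun i _ hi => by simp [hi]) (by simp), Pi.single_eq_same]
  · obtain rfl | hij := eq_or_ne i j
    · simpa only [Pi.single_eq_same] using hg.continuous.continuousOn
    · rw [Pi.single_eq_of_ne hij]
      exact continuousOn_const
  · obtain rfl | hij := eq_or_ne i j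
    · simpa only [Pi.single_eq_same] using (hg.differentiable one_ne_zero y).hasFDerivAt
    · rw [Pi.single_eq_of_ne hij, Pi.single_eq_of_ne hij]
      exact hasFDerivAt_const 0 y
  · simp only [hdiv]
    exact (continuous_pderiv hg j).continuousOn.integrableOn_compact isCompact_Icc

theorem Q3_ae_eq_Icc : Q3 =ᵐ[volume] Icc (![0, 0, -1] : Fin 3 → ℝ) ![1, 1, 1] := by
  have hbox : Q3 = univ.pi fun i =>
      Ioo ((![0, 0, -1] : Fin 3 → ℝ) i) ((![1, 1, 1] : Fin 3 → ℝ) i) := by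
    ext y
    simp [Q3, Set.mem_pi, Fin.forall_fin_succ]
  rw [hbox]
  exact Measure.univ_pi_Ioo_ae_eq_Icc

theorem integrableOn_Q3 {G : Type*} [NormedAddCommGroup G] {f : (Fin 3 → ℝ) → G}
    (hf : Continuous f) : IntegrableOn f Q3 :=
  (hf.continuousOn.integrableOn_compact isCompact_Icc).congr_set_ae Q3_ae_eq_Icc

theorem setIntegral_Q3_pderiv {g : (Fin 3 → ℝ) → E} (hg : ContDiff ℝ 1 g)
    (j : Fin 3) : ∫ y in Q3, pderiv j g y =
      (∫ x in Icc (![0, 0, -1] ∘ j.succAbove) (![1, 1, 1] ∘ j.succAbove),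
        g (j.insertNth (![1, 1, 1] j) x)) -
      ∫ x in Icc (![0, 0, -1] ∘ j.succAbove) (![1, 1, 1] ∘ j.succAbove),
        g (j.insertNth (![0, 0, -1] j) x) := by
  rw [setIntegral_congr_set Q3_ae_eq_Icc, setIntegral_Icc_pderiv _ hg]
  intro i
  fin_cases i <;> norm_num

theorem Per3.setIntegral_pderiv_castSucc {g : (Fin 3 → ℝ) → E} (hper : Per3 g)
    (hg : ContDiff ℝ 1 g) (l : Fin 2) : ∫ y in Q3, pderiv l.castSucc g y = 0 := by
  rw [setIntegral_Q3_pderiv hg, sub_eq_zero]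
  refine setIntegral_congr_fun measurableSet_Icc fun x _ => ?_
  rw [← hper (l.castSucc.insertNth (![0, 0, -1] l.castSucc) x) (Pi.single l 1)]
  congr 1
  refine Fin.insertNth_eq_iff.2 ⟨?_, ?_⟩
  · fin_cases l <;> simp [lat3]
  · ext i
    rw [Fin.removeNth, Pi.add_apply, Fin.insertNth_apply_succAbove]
    fin_cases l <;> fin_cases i <;> simp [lat3, Fin.succAbove]

theorem setIntegral_pderiv_two {g : (Fin 3 → ℝ) → E} (hg : ContDiff ℝ 1 g) :
    ∫ y in Q3, pderiv 2 g y = (∫ x in Q2, g (ext3 x 1)) - ∫ x in Q2, g (ext3 x (-1)) := by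
  have hface : Q2 =ᵐ[volume]
      Icc (![0, 0, -1] ∘ (2 : Fin 3).succAbove) (![1, 1, 1] ∘ (2 : Fin 3).succAbove) := by
    have hlo : (![0, 0, -1] : Fin 3 → ℝ) ∘ (2 : Fin 3).succAbove = fun _ => 0 := by
      ext i; fin_cases i <;> rfl
    have hhi : (![1, 1, 1] : Fin 3 → ℝ) ∘ (2 : Fin 3).succAbove = fun _ => 1 := by
      ext i; fin_cases i <;> rfl
    rw [hlo, hhi]
    exact Measure.univ_pi_Ioo_ae_eq_Icc
  rw [setIntegral_Q3_pderiv hg, setIntegral_congr_set hface, setIntegral_congr_set hface]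
  simp only [insertNth_two_eq_ext3, Matrix.cons_val]

end

section

variable {E F : Type*} [NormedAddCommGroup E] [NormedSpace ℝ E] [NormedAddCommGroup F]
  [NormedSpace ℝ F] {n : ℕ}

theorem pderiv_clm_comp (L : E →L[ℝ] F) {f : (Fin n → ℝ) → E} {y : Fin n → ℝ}
    (hf : DifferentiableAt ℝ f y) (i : Fin n) :
    pderiv i (fun z => L (f z)) y = L (pderiv i f y) :=
  congrArg (· (Pi.single i 1)) (L.hasFDerivAt.comp y hf.hasFDerivAt).fderiv

theorem pderiv_apply {m : ℕ} {X : (Fin n → ℝ) → (Fin m → ℝ)} {y : Fin n → ℝ}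
    (hX : DifferentiableAt ℝ X y) (i : Fin n) (k : Fin m) :
    pderiv i (fun z => X z k) y = pderiv i X y k :=
  pderiv_clm_comp (.proj k) hX i

theorem pderiv_mul {u v : (Fin n → ℝ) → ℝ} {y : Fin n → ℝ} (hu : DifferentiableAt ℝ u y)
    (hv : DifferentiableAt ℝ v y) (i : Fin n) :
    pderiv i (fun z => u z * v z) y = u y * pderiv i v y + pderiv i u y * v y := by
  rw [pderiv, fderiv_fun_mul hu hv, mul_comm (pderiv i u y)]
  rfl

theorem pderiv_fderiv {f : (Fin n → ℝ) → E} (hf : ContDiff ℝ 2 f) (i : Fin n) :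
    pderiv i (fderiv ℝ f) = fderiv ℝ (pderiv i f) := by
  ext1 y
  have hd : DifferentiableAt ℝ (fderiv ℝ f) y :=
    (hf.fderiv_right (m := 1) (by norm_num)).differentiable one_ne_zero y
  have hsymm := hf.contDiffAt.isSymmSndFDerivAt (x := y) (by simp)
  ext v
  unfold pderiv
  rw [fderiv_clm_apply hd (differentiableAt_const _), fderiv_fun_const]
  simp [hsymm.eq v]

theorem pderiv_comm {f : (Fin n → ℝ) → E} (hf : ContDiff ℝ 2 f) (i j : Fin n) :
    pderiv i (pderiv j f) = pderiv j (pderiv i f) := by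
  have hd : Differentiable ℝ (fderiv ℝ f) :=
    (hf.fderiv_right (m := 1) (by norm_num)).differentiable one_ne_zero
  ext1 y
  calc pderiv i (pderiv j f) y = pderiv i (fderiv ℝ f) y (Pi.single j 1) :=
        pderiv_clm_comp (.apply ℝ E (Pi.single j 1)) (hd y) i
    _ = pderiv j (pderiv i f) y := by rw [pderiv_fderiv hf]; rfl

/-- The Jacobian `∂(u, v) / ∂(y_k, y_i)`, a null Lagrangian: its integral depends on the boundary
values only. -/
def jacobian (k i : Fin n) (u v : (Fin n → ℝ) → ℝ) (y : Fin n → ℝ) : ℝ :=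
  pderiv k u y * pderiv i v y - pderiv i u y * pderiv k v y

theorem contDiff_mul_pderiv {u v : (Fin n → ℝ) → ℝ} (hu : ContDiff ℝ 1 u) (hv : ContDiff ℝ 2 v)
    (i : Fin n) : ContDiff ℝ 1 fun y => u y * pderiv i v y :=
  hu.mul (contDiff_pderiv hv (by norm_num) i)

theorem continuous_jacobian {u v : (Fin n → ℝ) → ℝ} (hu : ContDiff ℝ 1 u) (hv : ContDiff ℝ 1 v)
    (k i : Fin n) : Continuous (jacobian k i u v) :=
  ((continuous_pderiv hu k).mul (continuous_pderiv hv i)).sub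
    ((continuous_pderiv hu i).mul (continuous_pderiv hv k))

theorem jacobian_eq_pderiv_sub {u v : (Fin n → ℝ) → ℝ} (hu : ContDiff ℝ 1 u)
    (hv : ContDiff ℝ 2 v) (k i : Fin n) (y : Fin n → ℝ) : jacobian k i u v y =
      pderiv k (fun z => u z * pderiv i v z) y - pderiv i (fun z => u z * pderiv k v z) y := by
  have hu' := hu.differentiable one_ne_zero y
  have hv' (j : Fin n) : DifferentiableAt ℝ (pderiv j v) y :=
    (contDiff_pderiv hv (m := 1) (by norm_num) j).differentiable one_ne_zero y
  rw [pderiv_mul hu' (hv' i), pderiv_mul hu' (hv' k), pderiv_comm hv k i, jacobian]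
  ring

theorem setIntegral_Q3_jacobian {u v : (Fin 3 → ℝ) → ℝ} (hu : ContDiff ℝ 1 u)
    (hv : ContDiff ℝ 2 v) (k i : Fin 3) : ∫ y in Q3, jacobian k i u v y =
      (∫ y in Q3, pderiv k (fun z => u z * pderiv i v z) y) -
        ∫ y in Q3, pderiv i (fun z => u z * pderiv k v z) y := by
  simp only [jacobian_eq_pderiv_sub hu hv]
  exact integral_sub (integrableOn_Q3 (continuous_pderiv (contDiff_mul_pderiv hu hv i) k))
    (integrableOn_Q3 (continuous_pderiv (contDiff_mul_pderiv hu hv k) i))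

theorem setIntegral_pderiv_castSucc_mul_pderiv {u v : (Fin 3 → ℝ) → ℝ} (hu : ContDiff ℝ 1 u)
    (hv : ContDiff ℝ 2 v) (hup : Per3 u) (hvp : Per3 v) (l : Fin 2) (i : Fin 3) :
    ∫ y in Q3, pderiv l.castSucc (fun z => u z * pderiv i v z) y = 0 :=
  (hup.comp₂ (per3_pderiv hvp i) (· * ·)).setIntegral_pderiv_castSucc
    (contDiff_mul_pderiv hu hv i) l

theorem setIntegral_jacobian_castSucc_castSucc {u v : (Fin 3 → ℝ) → ℝ} (hu : ContDiff ℝ 1 u)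
    (hv : ContDiff ℝ 2 v) (hup : Per3 u) (hvp : Per3 v) (k i : Fin 2) :
    ∫ y in Q3, jacobian k.castSucc i.castSucc u v y = 0 := by
  rw [setIntegral_Q3_jacobian hu hv, setIntegral_pderiv_castSucc_mul_pderiv hu hv hup hvp,
    setIntegral_pderiv_castSucc_mul_pderiv hu hv hup hvp, sub_zero]

theorem setIntegral_jacobian_two_castSucc {u v : (Fin 3 → ℝ) → ℝ} (hu : ContDiff ℝ 1 u)
    (hv : ContDiff ℝ 2 v) (hup : Per3 u) (hvp : Per3 v) (l : Fin 2) :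
    ∫ y in Q3, jacobian 2 l.castSucc u v y =
      (∫ x in Q2, u (ext3 x 1) * pderiv l.castSucc v (ext3 x 1)) -
        ∫ x in Q2, u (ext3 x (-1)) * pderiv l.castSucc v (ext3 x (-1)) := by
  rw [setIntegral_Q3_jacobian hu hv, setIntegral_pderiv_castSucc_mul_pderiv hu hv hup hvp, sub_zero,
    setIntegral_pderiv_two (contDiff_mul_pderiv hu hv l.castSucc)]

/-- The curl as a linear function of the derivative, so that
`curl3 X y = curlCLM (fderiv ℝ X y)`. -/
def curlCLM : ((Fin 3 → ℝ) →L[ℝ] (Fin 3 → ℝ)) →L[ℝ] (Fin 3 → ℝ) :=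
  let entry (l i : Fin 3) : ((Fin 3 → ℝ) →L[ℝ] (Fin 3 → ℝ)) →L[ℝ] ℝ :=
    (ContinuousLinearMap.proj i).comp (.apply ℝ (Fin 3 → ℝ) (Pi.single l 1))
  .pi ![entry 1 2 - entry 2 1, entry 2 0 - entry 0 2, entry 0 1 - entry 1 0]

/-- The divergence as a linear function of the derivative, so that
`div3 X y = divCLM (fderiv ℝ X y)`. -/
def divCLM : ((Fin 3 → ℝ) →L[ℝ] (Fin 3 → ℝ)) →L[ℝ] ℝ :=
  ∑ i, (ContinuousLinearMap.proj i).comp (.apply ℝ (Fin 3 → ℝ) (Pi.single i 1))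

theorem curlCLM_apply (L : (Fin 3 → ℝ) →L[ℝ] (Fin 3 → ℝ)) : curlCLM L =
    ![L (Pi.single 1 1) 2 - L (Pi.single 2 1) 1, L (Pi.single 2 1) 0 - L (Pi.single 0 1) 2,
      L (Pi.single 0 1) 1 - L (Pi.single 1 1) 0] := by
  ext k
  fin_cases k <;> rfl

theorem divCLM_apply (L : (Fin 3 → ℝ) →L[ℝ] (Fin 3 → ℝ)) :
    divCLM L = ∑ i, L (Pi.single i 1) i := by
  simp [divCLM]

theorem curl3_eq {X : (Fin 3 → ℝ) → (Fin 3 → ℝ)} (hX : Differentiable ℝ X) :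
    curl3 X = fun y => curlCLM (fderiv ℝ X y) := by
  ext y k
  have hentry (l i : Fin 3) : fderiv ℝ (fun z => X z i) y (Pi.single l 1) =
      fderiv ℝ X y (Pi.single l 1) i := pderiv_apply (hX y) l i
  simp only [curl3, hentry, curlCLM_apply, eps, Fin.sum_univ_three]
  fin_cases k <;> simp <;> ring

theorem div3_eq {X : (Fin 3 → ℝ) → (Fin 3 → ℝ)} (hX : Differentiable ℝ X) :
    div3 X = fun y => divCLM (fderiv ℝ X y) := by
  ext y
  rw [divCLM_apply]
  exact Finset.sum_congr rfl fun i _ => pderiv_apply (hX y) i i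

theorem sum_sq_apply_single_eq (L : (Fin 3 → ℝ) →L[ℝ] (Fin 3 → ℝ)) :
    ∑ i, ∑ k, L (Pi.single i 1) k ^ 2 = (∑ k, curlCLM L k ^ 2) + divCLM L ^ 2 +
      2 * ((L (Pi.single 1 1) 0 * L (Pi.single 0 1) 1 - L (Pi.single 0 1) 0 * L (Pi.single 1 1) 1) +
        (L (Pi.single 2 1) 0 * L (Pi.single 0 1) 2 - L (Pi.single 0 1) 0 * L (Pi.single 2 1) 2) +
        (L (Pi.single 2 1) 1 * L (Pi.single 1 1) 2 -
          L (Pi.single 1 1) 1 * L (Pi.single 2 1) 2)) := by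
  simp only [curlCLM_apply, divCLM_apply, Fin.sum_univ_three, Matrix.cons_val]
  ring

theorem sum_sq_pderiv_eq {X : (Fin 3 → ℝ) → (Fin 3 → ℝ)} (hX : Differentiable ℝ X)
    (y : Fin 3 → ℝ) : ∑ i, ∑ k, pderiv i X y k ^ 2 = (∑ k, curl3 X y k ^ 2) + div3 X y ^ 2 +
      2 * (jacobian 1 0 (X · 0) (X · 1) y +
        ∑ l : Fin 2, jacobian 2 l.castSucc (X · l.castSucc) (X · 2) y) := by
  simp only [jacobian, pderiv_apply (hX y), curl3_eq hX, div3_eq hX, Fin.sum_univ_two, ← add_assoc]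
  exact sum_sq_apply_single_eq (fderiv ℝ X y)

/-- The normal component `∂̄_l X · N` of a tangential derivative, on the face at height `ε`. The
outward normal of the faces `ε = ±1` is `N = (0, 0, ε)`. -/
def normalTangentialDeriv (X : (Fin 3 → ℝ) → (Fin 3 → ℝ)) (ε : ℝ) (l : Fin 2)
    (x : Fin 2 → ℝ) : ℝ :=
  ε * fderiv ℝ X (ext3 x ε) (Pi.single l.castSucc 1) 2

theorem setIntegral_jacobian_eq_normalTangentialDeriv {X : (Fin 3 → ℝ) → (Fin 3 → ℝ)}
    (hX : ContDiff ℝ 2 X) (hper : Per3 X) (l : Fin 2) :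
    ∫ y in Q3, jacobian 2 l.castSucc (X · l.castSucc) (X · 2) y =
      (∫ x in Q2, X (ext3 x 1) l.castSucc * normalTangentialDeriv X 1 l x) +
        ∫ x in Q2, X (ext3 x (-1)) l.castSucc * normalTangentialDeriv X (-1) l x := by
  have hpderiv (y : Fin 3 → ℝ) : pderiv l.castSucc (X · 2) y =
      fderiv ℝ X y (Pi.single l.castSucc 1) 2 :=
    pderiv_apply (hX.differentiable two_ne_zero y) _ _
  rw [setIntegral_jacobian_two_castSucc ((contDiff_pi.1 hX _).of_le one_le_two) (contDiff_pi.1 hX 2)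
    (hper.comp (· l.castSucc)) (hper.comp (· 2))]
  simp only [hpderiv, normalTangentialDeriv, one_mul, neg_one_mul, mul_neg, integral_neg,
    sub_eq_add_neg]

theorem setIntegral_sum_sq_pderiv_eq {X : (Fin 3 → ℝ) → (Fin 3 → ℝ)} (hX : ContDiff ℝ 2 X)
    (hper : Per3 X) : ∫ y in Q3, ∑ i, ∑ k, pderiv i X y k ^ 2 =
      (∫ y in Q3, (∑ k, curl3 X y k ^ 2) + div3 X y ^ 2) +
        2 * ∑ l : Fin 2, ((∫ x in Q2, X (ext3 x 1) l.castSucc * normalTangentialDeriv X 1 l x) +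
          ∫ x in Q2, X (ext3 x (-1)) l.castSucc * normalTangentialDeriv X (-1) l x) := by
  have hX₁ : ContDiff ℝ 1 X := hX.of_le one_le_two
  have hd : Differentiable ℝ X := hX₁.differentiable one_ne_zero
  have : Continuous (fderiv ℝ X) := hX₁.continuous_fderiv one_ne_zero
  have ccurl : Continuous fun y => (∑ k, curl3 X y k ^ 2) + div3 X y ^ 2 := by
    rw [curl3_eq hd, div3_eq hd]
    fun_prop
  have cJ (k i a b : Fin 3) : Continuous (jacobian k i (X · a) (X · b)) :=
    continuous_jacobian (contDiff_pi.1 hX₁ a) (contDiff_pi.1 hX₁ b) k i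
  have cJ₂ : Continuous fun y => ∑ l : Fin 2, jacobian 2 l.castSucc (X · l.castSucc) (X · 2) y :=
    continuous_finsetSum _ fun l _ => cJ ..
  have hJ₁₀ : ∫ y in Q3, jacobian 1 0 (X · 0) (X · 1) y = 0 :=
    setIntegral_jacobian_castSucc_castSucc (contDiff_pi.1 hX₁ 0) (contDiff_pi.1 hX 1)
      (hper.comp (· 0)) (hper.comp (· 1)) 1 0
  simp only [sum_sq_pderiv_eq hd]
  rw [integral_add (integrableOn_Q3 ccurl)
      (integrableOn_Q3 (((cJ 1 0 0 1).fun_add cJ₂).const_mul 2)),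
    integral_const_mul, integral_add (integrableOn_Q3 (cJ 1 0 0 1)) (integrableOn_Q3 cJ₂), hJ₁₀,
    zero_add, integral_finsetSum _ fun l _ => integrableOn_Q3 (cJ ..)]
  simp only [setIntegral_jacobian_eq_normalTangentialDeriv hX hper]

end

/-! ### Integer-order norms on the slab -/

section

variable {E F : Type*} [NormedAddCommGroup E] [NormedSpace ℝ E] [NormedAddCommGroup F]
  [NormedSpace ℝ F] {n : ℕ}

theorem norm_proj_le_one {ι : Type*} [Fintype ι] (i : ι) :
    ‖(ContinuousLinearMap.proj i : (ι → ℝ) →L[ℝ] ℝ)‖ ≤ 1 :=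
  ContinuousLinearMap.opNorm_le_bound _ zero_le_one fun v => by
    simpa using norm_le_pi_norm v i

theorem HOmega3n_eq_eLpNorm (n : ℕ) (f : (Fin 3 → ℝ) → E) : HOmega3n n f =
    (∑ k ∈ Finset.range (n + 1),
      eLpNorm (fun y => ‖iteratedFDeriv ℝ k f y‖) 2 (volume.restrict Q3) ^ (2 : ℝ)) ^
        (1 / 2 : ℝ) := by
  have hsq (k : ℕ) : eLpNorm (fun y => ‖iteratedFDeriv ℝ k f y‖) 2 (volume.restrict Q3) ^ (2 : ℝ) =
      ∫⁻ y in Q3, ‖iteratedFDeriv ℝ k f y‖ₑ ^ 2 := by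
    have h := eLpNorm_nnreal_pow_eq_lintegral (f := fun y => ‖iteratedFDeriv ℝ k f y‖)
      (μ := volume.restrict Q3) (p := 2) two_ne_zero
    simpa only [ENNReal.coe_ofNat, NNReal.coe_ofNat, ENNReal.rpow_ofNat, enorm_norm] using h
  simp only [hsq]
  rfl

theorem HOmega3n_add_le {f g : (Fin 3 → ℝ) → E} (hf : ContDiff ℝ n f) (hg : ContDiff ℝ n g) :
    HOmega3n n (f + g) ≤ HOmega3n n f + HOmega3n n g := by
  have hnorm : ∀ k ∈ Finset.range (n + 1),
      eLpNorm (fun y => ‖iteratedFDeriv ℝ k (f + g) y‖) 2 (volume.restrict Q3) ≤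
        eLpNorm (fun y => ‖iteratedFDeriv ℝ k f y‖) 2 (volume.restrict Q3) +
          eLpNorm (fun y => ‖iteratedFDeriv ℝ k g y‖) 2 (volume.restrict Q3) := by
    intro k hk
    have hkn : ((k : ℕ∞) : WithTop ℕ∞) ≤ n := by exact_mod_cast Finset.mem_range_succ_iff.1 hk
    rw [iteratedFDeriv_add (hf.of_le hkn) (hg.of_le hkn)]
    refine (eLpNorm_mono_real fun y => ?_).trans (eLpNorm_add_le
      (hf.continuous_iteratedFDeriv hkn).norm.aestronglyMeasurable
      (hg.continuous_iteratedFDeriv hkn).norm.aestronglyMeasurable one_le_two)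
    rw [norm_norm]
    exact norm_add_le (iteratedFDeriv ℝ k f y) (iteratedFDeriv ℝ k g y)
  simp only [HOmega3n_eq_eLpNorm]
  exact (ENNReal.rpow_le_rpow (Finset.sum_le_sum fun k hk =>
    ENNReal.rpow_le_rpow (hnorm k hk) zero_le_two) (by norm_num)).trans
      (ENNReal.Lp_add_le _ _ _ one_le_two)

theorem HOmega3n_sum_le {ι : Type*} (s : Finset ι) {f : ι → (Fin 3 → ℝ) → E}
    (hf : ∀ i ∈ s, ContDiff ℝ n (f i)) : HOmega3n n (∑ i ∈ s, f i) ≤ ∑ i ∈ s, HOmega3n n (f i) := by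
  have hzero : HOmega3n n (0 : (Fin 3 → ℝ) → E) = 0 := by
    simp [HOmega3n, Pi.zero_def]
  exact Finset.le_sum_of_subadditive_on_pred (HOmega3n n) (ContDiff ℝ n) hzero.le
    (fun _ _ => HOmega3n_add_le) (fun _ _ => ContDiff.add) f hf

theorem HOmega3n_clm_comp_le {L : E →L[ℝ] F} (hL : ‖L‖ ≤ 1) {f : (Fin 3 → ℝ) → E}
    (hf : ContDiff ℝ n f) : HOmega3n n (fun y => L (f y)) ≤ HOmega3n n f := by
  rw [← ENNReal.pow_le_pow_left_iff two_ne_zero, HOmega3n_sq, HOmega3n_sq]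
  gcongr with k hk y
  have hkn : ((k : ℕ∞) : WithTop ℕ∞) ≤ n := by exact_mod_cast Finset.mem_range_succ_iff.1 hk
  refine enorm_le_iff_norm_le.2 ((L.norm_iteratedFDeriv_comp_left hf.contDiffAt hkn).trans ?_)
  exact mul_le_of_le_one_left (norm_nonneg _) hL

theorem HOmega3n_sum_clm_comp_le {ι : Type*} (s : Finset ι) {f : ι → (Fin 3 → ℝ) → E}
    {L : ι → E →L[ℝ] F} (hL : ∀ i ∈ s, ‖L i‖ ≤ 1) (hf : ∀ i ∈ s, ContDiff ℝ n (f i)) :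
    HOmega3n n (fun y => ∑ i ∈ s, L i (f i y)) ≤ ∑ i ∈ s, HOmega3n n (f i) := by
  have hsum : (fun y => ∑ i ∈ s, L i (f i y)) = ∑ i ∈ s, fun y => L i (f i y) := by
    ext y
    rw [Finset.sum_apply]
  rw [hsum]
  exact (HOmega3n_sum_le s fun i hi => (L i).contDiff.comp (hf i hi)).trans
    (Finset.sum_le_sum fun i hi => HOmega3n_clm_comp_le (hL i hi) (hf i hi))

theorem HOmega3n_mono {m : ℕ} (hmn : m ≤ n) (f : (Fin 3 → ℝ) → E) :
    HOmega3n m f ≤ HOmega3n n f := by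
  rw [← ENNReal.pow_le_pow_left_iff two_ne_zero, HOmega3n_sq, HOmega3n_sq]
  exact Finset.sum_le_sum_of_subset (Finset.range_mono (by lia))

theorem HOmega3n_succ_sq (n : ℕ) (f : (Fin 3 → ℝ) → E) :
    HOmega3n (n + 1) f ^ 2 = HOmega3n 0 f ^ 2 + HOmega3n n (fderiv ℝ f) ^ 2 := by
  have hnorm (k : ℕ) (y : Fin 3 → ℝ) :
      ‖iteratedFDeriv ℝ k (fderiv ℝ f) y‖ₑ = ‖iteratedFDeriv ℝ (k + 1) f y‖ₑ :=
    enorm_eq_iff_norm_eq.2 norm_iteratedFDeriv_fderiv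
  simp only [HOmega3n_sq, hnorm]
  rw [Finset.sum_range_succ' _ (n + 1), add_comm, zero_add, Finset.sum_range_one]

theorem HOmega3n_pderiv_le {f : (Fin 3 → ℝ) → E} (hf : ContDiff ℝ (n + 1) f) (i : Fin 3) :
    HOmega3n n (pderiv i f) ≤ HOmega3n (n + 1) f := by
  refine (HOmega3n_clm_comp_le (norm_apply_single_one_le_one E i)
    (hf.fderiv_right le_rfl)).trans ?_
  rw [← ENNReal.pow_le_pow_left_iff two_ne_zero, HOmega3n_succ_sq]
  exact le_add_self

theorem HOmega3n_fderiv_le_sum {f : (Fin 3 → ℝ) → E} (hf : ContDiff ℝ (n + 1) f) :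
    HOmega3n n (fderiv ℝ f) ≤ ∑ i, HOmega3n n (pderiv i f) := by
  have hnorm (i : Fin 3) :
      ‖ContinuousLinearMap.smulRightL ℝ (Fin 3 → ℝ) E (ContinuousLinearMap.proj i)‖ ≤ 1 := by
    refine ContinuousLinearMap.opNorm_le_bound _ zero_le_one fun v => ?_
    rw [ContinuousLinearMap.smulRightL_apply_apply, ContinuousLinearMap.norm_smulRight_apply]
    gcongr
    exact norm_proj_le_one i
  have hfderiv : fderiv ℝ f = fun y =>
      ∑ i, ContinuousLinearMap.smulRightL ℝ (Fin 3 → ℝ) E (ContinuousLinearMap.proj i)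
        (pderiv i f y) := by
    ext y v
    conv_lhs => rw [pi_eq_sum_univ' v]
    simp [pderiv]
  rw [hfderiv]
  exact HOmega3n_sum_clm_comp_le _ (fun i _ => hnorm i) fun i _ => contDiff_pderiv hf le_rfl i

theorem HOmega3n_succ_le {f : (Fin 3 → ℝ) → E} (hf : ContDiff ℝ (n + 1) f) :
    HOmega3n (n + 1) f ≤ HOmega3n 0 f + ∑ i, HOmega3n n (pderiv i f) := by
  rw [← ENNReal.pow_le_pow_left_iff two_ne_zero, HOmega3n_succ_sq]
  calc HOmega3n 0 f ^ 2 + HOmega3n n (fderiv ℝ f) ^ 2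
      ≤ (HOmega3n 0 f + HOmega3n n (fderiv ℝ f)) ^ 2 := by
        rw [add_sq']
        exact le_self_add
    _ ≤ (HOmega3n 0 f + ∑ i, HOmega3n n (pderiv i f)) ^ 2 := by
        gcongr
        exact HOmega3n_fderiv_le_sum hf

end

section

variable {X : (Fin 3 → ℝ) → (Fin 3 → ℝ)} {n : ℕ}

theorem contDiff_curl3 (hX : ContDiff ℝ (n + 1) X) : ContDiff ℝ n (curl3 X) := by
  rw [curl3_eq (hX.differentiable (by simp))]
  exact curlCLM.contDiff.comp (hX.fderiv_right le_rfl)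

theorem contDiff_div3 (hX : ContDiff ℝ (n + 1) X) : ContDiff ℝ n (div3 X) := by
  rw [div3_eq (hX.differentiable (by simp))]
  exact divCLM.contDiff.comp (hX.fderiv_right le_rfl)

theorem curl3_pderiv (hX : ContDiff ℝ 2 X) (j : Fin 3) :
    curl3 (pderiv j X) = pderiv j (curl3 X) := by
  have hfderiv : Differentiable ℝ (fderiv ℝ X) :=
    (hX.fderiv_right (m := 1) le_rfl).differentiable one_ne_zero
  rw [curl3_eq (hX.differentiable two_ne_zero),
    curl3_eq ((contDiff_pderiv (m := 1) hX le_rfl j).differentiable one_ne_zero)]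
  ext1 y
  rw [pderiv_clm_comp curlCLM (hfderiv y), pderiv_fderiv hX]

theorem div3_pderiv (hX : ContDiff ℝ 2 X) (j : Fin 3) :
    div3 (pderiv j X) = pderiv j (div3 X) := by
  have hfderiv : Differentiable ℝ (fderiv ℝ X) :=
    (hX.fderiv_right (m := 1) le_rfl).differentiable one_ne_zero
  rw [div3_eq (hX.differentiable two_ne_zero),
    div3_eq ((contDiff_pderiv (m := 1) hX le_rfl j).differentiable one_ne_zero)]
  ext1 y
  rw [pderiv_clm_comp divCLM (hfderiv y), pderiv_fderiv hX]

/-- The map `v ↦ v a • e_b - v b • e_a`, a quarter turn in the plane of the axes `a ≠ b`. -/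
def quarterTurn (a b : Fin 3) : (Fin 3 → ℝ) →L[ℝ] (Fin 3 → ℝ) :=
  (ContinuousLinearMap.proj a).smulRight (Pi.single b 1) -
    (ContinuousLinearMap.proj b).smulRight (Pi.single a 1)

theorem norm_quarterTurn_le_one (a b : Fin 3) : ‖quarterTurn a b‖ ≤ 1 := by
  refine ContinuousLinearMap.opNorm_le_bound _ zero_le_one fun v => ?_
  rw [one_mul, pi_norm_le_iff_of_nonneg (norm_nonneg v)]
  intro i
  have ha := norm_le_pi_norm v a
  have hb := norm_le_pi_norm v b
  by_cases hia : i = a <;> by_cases hib : i = b <;>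
    simp_all [quarterTurn]

theorem pderiv_two_eq (hX : Differentiable ℝ X) : pderiv 2 X =
    (fun y => ∑ l : Fin 2, quarterTurn 2 l.castSucc (pderiv l.castSucc X y)) +
      (fun y => quarterTurn 1 0 (curl3 X y)) +
      fun y => ContinuousLinearMap.toSpanSingleton ℝ (Pi.single 2 1) (div3 X y) := by
  ext y k
  rw [curl3_eq hX, div3_eq hX]
  simp only [Pi.add_apply, curlCLM_apply, divCLM_apply, quarterTurn, pderiv, Fin.sum_univ_two,
    Fin.sum_univ_three]
  fin_cases k
  · simp
  · simp
  · simp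
    ring

theorem HOmega3n_pderiv_two_le (hX : ContDiff ℝ (n + 1) X) : HOmega3n n (pderiv 2 X) ≤
    ∑ l : Fin 2, HOmega3n n (pderiv l.castSucc X) + HOmega3n n (curl3 X) +
      HOmega3n n (div3 X) := by
  have hpderiv (l : Fin 2) := contDiff_pderiv hX le_rfl l.castSucc
  have htangential : ContDiff ℝ n fun y =>
      ∑ l : Fin 2, quarterTurn 2 l.castSucc (pderiv l.castSucc X y) :=
    ContDiff.sum fun l _ => (quarterTurn 2 l.castSucc).contDiff.comp (hpderiv l)
  have hcurl : ContDiff ℝ n fun y => quarterTurn 1 0 (curl3 X y) :=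
    (quarterTurn 1 0).contDiff.comp (contDiff_curl3 hX)
  have hdiv : ContDiff ℝ n fun y =>
      ContinuousLinearMap.toSpanSingleton ℝ (Pi.single 2 1 : Fin 3 → ℝ) (div3 X y) :=
    (ContinuousLinearMap.toSpanSingleton ℝ _).contDiff.comp (contDiff_div3 hX)
  have hnorm : ‖ContinuousLinearMap.toSpanSingleton ℝ (Pi.single 2 1 : Fin 3 → ℝ)‖ ≤ 1 := by
    rw [ContinuousLinearMap.norm_toSpanSingleton, Pi.norm_single, norm_one]
  rw [pderiv_two_eq (hX.differentiable (by simp))]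
  refine (HOmega3n_add_le (htangential.add hcurl) hdiv).trans ?_
  refine add_le_add ((HOmega3n_add_le htangential hcurl).trans (add_le_add ?_ ?_)) ?_
  · exact HOmega3n_sum_clm_comp_le _ (fun l _ => norm_quarterTurn_le_one _ _) fun l _ => hpderiv l
  · exact HOmega3n_clm_comp_le (norm_quarterTurn_le_one 1 0) (contDiff_curl3 hX)
  · exact HOmega3n_clm_comp_le hnorm (contDiff_div3 hX)

end

/-! ### Fractional norms on the boundary -/

section

variable {E : Type*} [NormedAddCommGroup E] [NormedSpace ℝ E] {σ τ : ℝ} {K : ℝ≥0∞}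
  {φ w : (Fin 2 → ℝ) → ℝ}

theorem gagliardo2Sq_const_smul (θ c : ℝ) (f : (Fin 2 → ℝ) → E) :
    gagliardo2Sq θ (fun x => c • f x) = ‖c‖ₑ ^ 2 * gagliardo2Sq θ f := by
  have hc : ‖c‖ₑ ^ 2 ≠ ⊤ := ENNReal.pow_ne_top enorm_ne_top
  simp only [gagliardo2Sq, ← smul_sub, nnnorm_smul, ENNReal.coe_mul, mul_pow, ← enorm_eq_nnnorm,
    mul_div_assoc, lintegral_const_mul' _ _ hc]

theorem HGamma2_const_mul (c : ℝ) (hw : ContDiff ℝ ⌊σ⌋₊ w) :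
    HGamma2 σ (fun x => c * w x) = ‖c‖ₑ * HGamma2 σ w := by
  have hsmul {k : ℕ} (hk : k ≤ ⌊σ⌋₊) :
      iteratedFDeriv ℝ k (fun x => c * w x) = fun x => c • iteratedFDeriv ℝ k w x := by
    ext1 x
    exact iteratedFDeriv_const_smul_apply' (a := c) (hw.contDiffAt.of_le (by exact_mod_cast hk))
  have hsq : HGamma2 σ (fun x => c * w x) ^ 2 = (‖c‖ₑ * HGamma2 σ w) ^ 2 := by
    rw [mul_pow, HGamma2_sq, HGamma2_sq, mul_add, Finset.mul_sum, mul_ite, mul_zero,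
      hsmul le_rfl, gagliardo2Sq_const_smul]
    congr 1
    refine Finset.sum_congr rfl fun k hk => ?_
    rw [hsmul (Finset.mem_range_succ_iff.1 hk),
      ← lintegral_const_mul' _ _ (ENNReal.pow_ne_top enorm_ne_top)]
    simp only [enorm_smul, mul_pow]
  exact (ENNReal.pow_right_strictMono two_ne_zero).injective hsq

theorem enorm_inv_toReal (hK₀ : K ≠ 0) (hK : K ≠ ⊤) : ‖K.toReal⁻¹‖ₑ = K⁻¹ := by
  rw [enorm_inv (ENNReal.toReal_ne_zero.2 ⟨hK₀, hK⟩), Real.enorm_of_nonneg ENNReal.toReal_nonneg,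
    ENNReal.ofReal_toReal hK]

theorem HGamma2_inv_toReal_mul_le_one (hw : ContDiff ℝ ⌊σ⌋₊ w) (hle : HGamma2 σ w ≤ K)
    (hK₀ : K ≠ 0) (hK : K ≠ ⊤) : HGamma2 σ (fun x => K.toReal⁻¹ * w x) ≤ 1 := by
  rw [HGamma2_const_mul _ hw, enorm_inv_toReal hK₀ hK, mul_comm, ← div_eq_mul_inv]
  exact ENNReal.div_le_of_le_mul (by rwa [one_mul])

theorem HGammaR_of_nonneg (hσ : 0 ≤ σ) (w : (Fin 2 → ℝ) → ℝ) : HGammaR σ w = HGamma2 σ w :=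
  if_pos hσ

theorem HGammaR_neg_le (hσ : 0 < σ) (h : ∀ φ : (Fin 2 → ℝ) → ℝ, ContDiff ℝ (⊤ : ℕ∞) φ → Per2 φ →
    HGamma2 σ φ ≤ 1 → ENNReal.ofReal (∫ x in Q2, w x * φ x) ≤ K) : HGammaR (-σ) w ≤ K := by
  rw [HGammaR, if_neg (not_le.2 (neg_neg_of_pos hσ)), neg_neg]
  exact iSup₂_le fun φ hφ => h φ hφ.1 hφ.2.1 hφ.2.2

theorem ofReal_setIntegral_mul_le_HGammaR_neg (hσ : 0 < σ) (w : (Fin 2 → ℝ) → ℝ)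
    (hφ : ContDiff ℝ (⊤ : ℕ∞) φ) (hper : Per2 φ) (hle : HGamma2 σ φ ≤ 1) :
    ENNReal.ofReal (∫ x in Q2, w x * φ x) ≤ HGammaR (-σ) w := by
  rw [HGammaR, if_neg (not_le.2 (neg_neg_of_pos hσ)), neg_neg]
  exact le_iSup₂ (f := fun (φ : (Fin 2 → ℝ) → ℝ)
    (_ : ContDiff ℝ (⊤ : ℕ∞) φ ∧ Per2 φ ∧ HGamma2 σ φ ≤ 1) =>
      ENNReal.ofReal (∫ x in Q2, w x * φ x)) φ ⟨hφ, hper, hle⟩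

theorem ofReal_setIntegral_mul_le (hσ : 0 < σ) (w : (Fin 2 → ℝ) → ℝ)
    (hφ : ContDiff ℝ (⊤ : ℕ∞) φ) (hper : Per2 φ) (hle : HGamma2 σ φ ≤ K) (hK₀ : K ≠ 0)
    (hK : K ≠ ⊤) : ENNReal.ofReal (∫ x in Q2, w x * φ x) ≤ K * HGammaR (-σ) w := by
  have hunit := HGamma2_inv_toReal_mul_le_one (hφ.of_le (by exact_mod_cast le_top)) hle hK₀ hK
  have hscaled := ofReal_setIntegral_mul_le_HGammaR_neg hσ w (contDiff_const.mul hφ)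
    (hper.comp (K.toReal⁻¹ * ·)) hunit
  simp only [mul_left_comm (w _)] at hscaled
  rw [integral_const_mul, ENNReal.ofReal_mul (inv_nonneg.2 ENNReal.toReal_nonneg),
    ENNReal.ofReal_inv_of_pos (ENNReal.toReal_pos hK₀ hK), ENNReal.ofReal_toReal hK] at hscaled
  rwa [ENNReal.inv_mul_le_iff hK₀ hK] at hscaled

theorem lintegral_enorm_sq_le_HGamma2_sq (σ : ℝ) (w : (Fin 2 → ℝ) → ℝ) :
    ∫⁻ x in Q2, ‖w x‖ₑ ^ 2 ≤ HGamma2 σ w ^ 2 := by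
  rw [HGamma2_sq]
  simp only [← enorm_iteratedFDeriv_zero w]
  exact (Finset.single_le_sum (f := fun k => ∫⁻ x in Q2, ‖iteratedFDeriv ℝ k w x‖ₑ ^ 2)
    (fun _ _ => zero_le) (Finset.mem_range.2 (Nat.succ_pos ⌊σ⌋₊))).trans le_self_add

theorem ofReal_setIntegral_mul_le_HGamma2_mul (σ τ : ℝ) (hw : Continuous w) (hφ : Continuous φ) :
    ENNReal.ofReal (∫ x in Q2, w x * φ x) ≤ HGamma2 τ w * HGamma2 σ φ := by
  have hsqrt (ρ : ℝ) (u : (Fin 2 → ℝ) → ℝ) :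
      (∫⁻ x in Q2, ‖u x‖ₑ ^ (2 : ℝ)) ^ (1 / 2 : ℝ) ≤ HGamma2 ρ u := by
    simp only [ENNReal.rpow_ofNat]
    rw [one_div, ENNReal.rpow_inv_le_iff two_pos, ENNReal.rpow_ofNat]
    exact lintegral_enorm_sq_le_HGamma2_sq ρ u
  calc ENNReal.ofReal (∫ x in Q2, w x * φ x)
      ≤ ∫⁻ x in Q2, ‖w x * φ x‖ₑ :=
        (Real.ofReal_le_enorm _).trans (enorm_integral_le_lintegral_enorm _)
    _ = ∫⁻ x in Q2, ((fun x => ‖w x‖ₑ) * fun x => ‖φ x‖ₑ) x := by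
        simp only [enorm_mul, Pi.mul_apply]
    _ ≤ (∫⁻ x in Q2, ‖w x‖ₑ ^ (2 : ℝ)) ^ (1 / 2 : ℝ) *
          (∫⁻ x in Q2, ‖φ x‖ₑ ^ (2 : ℝ)) ^ (1 / 2 : ℝ) :=
        ENNReal.lintegral_mul_le_Lp_mul_Lq _ Real.HolderConjugate.two_two
          hw.enorm.measurable.aemeasurable hφ.enorm.measurable.aemeasurable
    _ ≤ HGamma2 τ w * HGamma2 σ φ := mul_le_mul' (hsqrt τ w) (hsqrt σ φ)

theorem HGammaR_neg_le_HGammaR (hσ : 0 < σ) (hτ : 0 ≤ τ) (hw : Continuous w) :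
    HGammaR (-σ) w ≤ HGammaR τ w := by
  rw [HGammaR_of_nonneg hτ]
  exact HGammaR_neg_le hσ fun φ hφ _ hle =>
    (ofReal_setIntegral_mul_le_HGamma2_mul σ τ hw hφ.continuous).trans (mul_le_of_le_one_right' hle)

theorem enorm_setIntegral_mul_pderiv_le_of_HGamma2_le (hφ : Continuous φ) (hφper : Per2 φ)
    (hw : ContDiff ℝ 1 w) (hwper : Per2 w) (hφle : HGamma2 (1 / 2) φ ≤ 1)
    (hwle : HGamma2 (1 / 2) w ≤ 1) (j : Fin 2) : ‖∫ x in Q2, φ x * pderiv j w x‖ₑ ≤ 17 := by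
  have hgagliardo {u : (Fin 2 → ℝ) → ℝ} (hu : HGamma2 (1 / 2) u ≤ 1) :
      gagliardo2Sq (1 / 2) u ≤ 1 :=
    (le_add_self.trans_eq (HGamma2_one_half_sq u).symm).trans (pow_le_one' hu 2)
  calc ‖∫ x in Q2, φ x * pderiv j w x‖ₑ
      ≤ gagliardo2Sq (1 / 2) φ + 16 * gagliardo2Sq (1 / 2) w :=
        hφper.enorm_setIntegral_mul_pderiv_le hwper hφ hw j
    _ ≤ 1 + 16 * 1 := by gcongr <;> exact hgagliardo ‹_›
    _ = 17 := by norm_num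

theorem enorm_setIntegral_mul_pderiv_le_HGamma2 (hφ : Continuous φ) (hφper : Per2 φ)
    (hw : ContDiff ℝ 1 w) (hwper : Per2 w) (hφle : HGamma2 (1 / 2) φ ≤ 1) (j : Fin 2) :
    ‖∫ x in Q2, φ x * pderiv j w x‖ₑ ≤ 17 * HGamma2 (1 / 2) w := by
  have hfloor : ContDiff ℝ ⌊(1 / 2 : ℝ)⌋₊ w :=
    hw.of_le (by exact_mod_cast Nat.floor_le_one_of_le_one one_half_lt_one.le)
  have hscaled {K : ℝ≥0∞} (hle : HGamma2 (1 / 2) w ≤ K) (hK₀ : K ≠ 0) (hK : K ≠ ⊤) :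
      ‖∫ x in Q2, φ x * pderiv j w x‖ₑ ≤ 17 * K := by
    have hpderiv : pderiv j (fun x => K.toReal⁻¹ * w x) = fun x => K.toReal⁻¹ * pderiv j w x := by
      ext1 x
      exact pderiv_clm_comp (ContinuousLinearMap.mul ℝ ℝ K.toReal⁻¹)
        (hw.differentiable one_ne_zero x) j
    have hunit := enorm_setIntegral_mul_pderiv_le_of_HGamma2_le hφ hφper (contDiff_const.mul hw)
      (hwper.comp (K.toReal⁻¹ * ·)) hφle
      (HGamma2_inv_toReal_mul_le_one hfloor hle hK₀ hK) j
    simp only [hpderiv, mul_left_comm (φ _), integral_const_mul, enorm_mul,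
      enorm_inv_toReal hK₀ hK] at hunit
    rwa [ENNReal.inv_mul_le_iff hK₀ hK, mul_comm] at hunit
  rw [← ENNReal.inv_mul_le_iff (by norm_num) (by norm_num)]
  refine le_of_forall_gt_imp_ge_of_dense fun K hK => ?_
  rw [ENNReal.inv_mul_le_iff (by norm_num) (by norm_num)]
  obtain rfl | hK_top := eq_or_ne K ⊤
  · simp
  · exact hscaled hK.le hK.ne_bot hK_top

theorem HGammaR_neg_one_half_pderiv_le (hw : ContDiff ℝ 1 w) (hper : Per2 w) (j : Fin 2) :
    HGammaR (-(1 / 2)) (pderiv j w) ≤ 17 * HGamma2 (1 / 2) w :=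
  HGammaR_neg_le one_half_pos fun φ hφ hφper hle => by
    simp only [mul_comm (pderiv j w _)]
    exact (Real.ofReal_le_enorm _).trans
      (enorm_setIntegral_mul_pderiv_le_HGamma2 hφ.continuous hφper hw hper hle j)

/-- Evaluation of the last variable of a `(k + 1)`-linear map at the `j`-th basis vector. -/
def evalLastSingle (k : ℕ) (j : Fin 2) :
    ((Fin 2 → ℝ) [×(k + 1)]→L[ℝ] ℝ) →L[ℝ] ((Fin 2 → ℝ) [×k]→L[ℝ] ℝ) :=
  (ContinuousLinearMap.compContinuousMultilinearMapL ℝ (fun _ => Fin 2 → ℝ)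
    ((Fin 2 → ℝ) →L[ℝ] ℝ) ℝ (ContinuousLinearMap.apply ℝ ℝ (Pi.single j 1 : Fin 2 → ℝ))).comp
      (continuousMultilinearCurryRightEquiv' ℝ k
        (Fin 2 → ℝ) ℝ).toContinuousLinearEquiv.toContinuousLinearMap

theorem norm_evalLastSingle_apply_le (k : ℕ) (j : Fin 2) (A : (Fin 2 → ℝ) [×(k + 1)]→L[ℝ] ℝ) :
    ‖evalLastSingle k j A‖ ≤ ‖A‖ := by
  change ‖(ContinuousLinearMap.apply ℝ ℝ (Pi.single j 1 : Fin 2 → ℝ)).compContinuousMultilinearMap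
    (continuousMultilinearCurryRightEquiv' ℝ k (Fin 2 → ℝ) ℝ A)‖ ≤ ‖A‖
  refine (ContinuousLinearMap.norm_compContinuousMultilinearMap_le _ _).trans ?_
  rw [LinearIsometryEquiv.norm_map]
  exact mul_le_of_le_one_left (norm_nonneg _) (norm_apply_single_one_le_one ℝ j)

theorem iteratedFDeriv_pderiv {k : ℕ} (hw : ContDiff ℝ (k + 1) w) (j : Fin 2) (x : Fin 2 → ℝ) :
    iteratedFDeriv ℝ k (pderiv j w) x = evalLastSingle k j (iteratedFDeriv ℝ (k + 1) w x) := by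
  have hcurry : continuousMultilinearCurryRightEquiv' ℝ k (Fin 2 → ℝ) ℝ
      (iteratedFDeriv ℝ (k + 1) w x) = iteratedFDeriv ℝ k (fderiv ℝ w) x := by
    rw [iteratedFDeriv_succ_eq_comp_right, Function.comp_apply,
      LinearIsometryEquiv.apply_symm_apply]
  refine ((ContinuousLinearMap.apply ℝ ℝ (Pi.single j 1 : Fin 2 → ℝ)).iteratedFDeriv_comp_left
    (hw.fderiv_right le_rfl).contDiffAt le_rfl).trans ?_
  rw [← hcurry]
  rfl

theorem HGamma2_pderiv_le (hσ : 0 ≤ σ) (hw : ContDiff ℝ (⌊σ⌋₊ + 1) w) (j : Fin 2) :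
    HGamma2 σ (pderiv j w) ≤ HGamma2 (σ + 1) w := by
  have hcond : σ + 1 = ((⌊σ⌋₊ + 1 : ℕ) : ℝ) ↔ σ = ⌊σ⌋₊ := by
    rw [Nat.cast_add_one, add_left_inj]
  have hfrac : σ + 1 - ((⌊σ⌋₊ + 1 : ℕ) : ℝ) = σ - ⌊σ⌋₊ := by
    rw [Nat.cast_add_one, add_sub_add_right_eq_sub]
  rw [← ENNReal.pow_le_pow_left_iff two_ne_zero, HGamma2_sq, HGamma2_sq, Nat.floor_add_one hσ,
    Finset.sum_range_succ' _ (⌊σ⌋₊ + 1), hfrac]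
  simp only [hcond]
  refine add_le_add (le_add_right (Finset.sum_le_sum fun k hk => ?_)) ?_
  · gcongr with x
    have hkσ : ((k : ℕ∞) : WithTop ℕ∞) + 1 ≤ ⌊σ⌋₊ + 1 := by
      gcongr
      exact_mod_cast Finset.mem_range_succ_iff.1 hk
    rw [iteratedFDeriv_pderiv (hw.of_le hkσ)]
    exact enorm_le_iff_norm_le.2 (norm_evalLastSingle_apply_le k j _)
  · split_ifs
    · exact le_rfl
    · unfold gagliardo2Sq
      gcongr with x y
      rw [iteratedFDeriv_pderiv hw, iteratedFDeriv_pderiv hw, ← map_sub]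
      exact norm_evalLastSingle_apply_le _ j _

theorem HGammaR_pderiv_le (hσ : σ = -(1 / 2) ∨ 0 ≤ σ) (hw : ContDiff ℝ (⊤ : ℕ∞) w) (hper : Per2 w)
    (j : Fin 2) : HGammaR σ (pderiv j w) ≤ 17 * HGammaR (σ + 1) w := by
  obtain rfl | hσ := hσ
  · rw [neg_add_eq_sub, sub_half, HGammaR_of_nonneg one_half_pos.le]
    exact HGammaR_neg_one_half_pderiv_le (hw.of_le (by exact_mod_cast le_top)) hper j
  · rw [HGammaR_of_nonneg hσ, HGammaR_of_nonneg (add_nonneg hσ zero_le_one)]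
    exact (HGamma2_pderiv_le hσ (hw.of_le (by exact_mod_cast le_top)) j).trans
      (le_mul_of_one_le_left' (by norm_num))

end

section

variable {E : Type*} [NormedAddCommGroup E] [NormedSpace ℝ E] {X : (Fin 3 → ℝ) → (Fin 3 → ℝ)}

theorem pderiv_comp_ext3 {f : (Fin 3 → ℝ) → E} (hf : Differentiable ℝ f) (z : ℝ) (j : Fin 2) :
    pderiv j (fun x => f (ext3 x z)) = fun x => pderiv j.castSucc f (ext3 x z) := by
  ext1 x
  rw [pderiv, fderiv_comp_ext3 hf, ContinuousLinearMap.comp_apply, horizontalCLM_single, pderiv]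

theorem contDiff_normalTangentialDeriv (hX : ContDiff ℝ (⊤ : ℕ∞) X) (ε : ℝ) (l : Fin 2) :
    ContDiff ℝ (⊤ : ℕ∞) (normalTangentialDeriv X ε l) :=
  contDiff_const.mul (contDiff_pi.1 (contDiff_comp_ext3 (contDiff_pderiv hX le_rfl _) ε) 2)

theorem per2_normalTangentialDeriv (hper : Per3 X) (ε : ℝ) (l : Fin 2) :
    Per2 (normalTangentialDeriv X ε l) :=
  ((per3_pderiv hper l.castSucc).comp_ext3 ε).comp fun v => ε * v 2

theorem normalTangentialDeriv_pderiv (hX : ContDiff ℝ 2 X) (ε : ℝ) (l j : Fin 2) :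
    normalTangentialDeriv (pderiv j.castSucc X) ε l = pderiv j (normalTangentialDeriv X ε l) := by
  have hd : Differentiable ℝ (pderiv l.castSucc X) :=
    (contDiff_pderiv hX le_rfl _).differentiable one_ne_zero
  have hslice : Differentiable ℝ fun x => pderiv l.castSucc X (ext3 x ε) :=
    (contDiff_comp_ext3 (contDiff_pderiv hX le_rfl _) ε).differentiable one_ne_zero
  ext1 x
  calc normalTangentialDeriv (pderiv j.castSucc X) ε l x
      = ε * pderiv j (fun x => pderiv l.castSucc X (ext3 x ε)) x 2 := by
        rw [pderiv_comp_ext3 hd, pderiv_comm hX]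
        rfl
    _ = pderiv j (normalTangentialDeriv X ε l) x :=
        (pderiv_clm_comp (ε • ContinuousLinearMap.proj 2) (hslice x) j).symm

/-- The boundary term `|∂̄ X · N|_{H^σ(Γ)}`, summed over both faces and both tangential
derivatives. -/
def normalTangentialNorm (σ : ℝ) (X : (Fin 3 → ℝ) → (Fin 3 → ℝ)) : ℝ≥0∞ :=
  ∑ l : Fin 2, (HGammaR σ (normalTangentialDeriv X 1 l) +
    HGammaR σ (normalTangentialDeriv X (-1) l))

theorem normalTangentialNorm_neg_le {σ τ : ℝ} (hσ : 0 < σ) (hτ : 0 ≤ τ)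
    (hX : ContDiff ℝ (⊤ : ℕ∞) X) : normalTangentialNorm (-σ) X ≤ normalTangentialNorm τ X :=
  Finset.sum_le_sum fun l _ =>
    add_le_add (HGammaR_neg_le_HGammaR hσ hτ (contDiff_normalTangentialDeriv hX 1 l).continuous)
      (HGammaR_neg_le_HGammaR hσ hτ (contDiff_normalTangentialDeriv hX (-1) l).continuous)

theorem normalTangentialNorm_pderiv_le {σ : ℝ} (hσ : σ = -(1 / 2) ∨ 0 ≤ σ)
    (hX : ContDiff ℝ (⊤ : ℕ∞) X) (hper : Per3 X) (j : Fin 2) :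
    normalTangentialNorm σ (pderiv j.castSucc X) ≤ 17 * normalTangentialNorm (σ + 1) X := by
  have hface (ε : ℝ) (l : Fin 2) :
      HGammaR σ (normalTangentialDeriv (pderiv j.castSucc X) ε l) ≤
        17 * HGammaR (σ + 1) (normalTangentialDeriv X ε l) := by
    rw [normalTangentialDeriv_pderiv (hX.of_le (ENat.LEInfty.out))]
    exact HGammaR_pderiv_le hσ (contDiff_normalTangentialDeriv hX ε l)
      (per2_normalTangentialDeriv hper ε l) j
  simp only [normalTangentialNorm, Finset.mul_sum, mul_add]
  exact Finset.sum_le_sum fun l _ => add_le_add (hface 1 l) (hface (-1) l)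

theorem ofReal_setIntegral_trace_mul_le (hX : ContDiff ℝ (⊤ : ℕ∞) X) (hper : Per3 X)
    (hX₀ : HOmega3n 1 X ≠ 0) (hX_top : HOmega3n 1 X ≠ ⊤) {ε : ℝ} (hε : ε = 1 ∨ ε = -1) (i : Fin 3)
    (w : (Fin 2 → ℝ) → ℝ) : ENNReal.ofReal (∫ x in Q2, X (ext3 x ε) i * w x) ≤
      17 * HOmega3n 1 X * HGammaR (-(1 / 2)) w := by
  have hX₁ : ContDiff ℝ 1 X := hX.of_le (by exact_mod_cast le_top)
  have htrace : HGamma2 (1 / 2) (fun x => X (ext3 x ε) i) ≤ 17 * HOmega3n 1 X :=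
    (HGamma2_one_half_trace_le (contDiff_pi.1 hX₁ i) (hper.comp (· i)) hε).trans
      (mul_le_mul_right (HOmega3n_clm_comp_le (norm_proj_le_one i) hX₁) 17)
  simp only [mul_comm (X _ _)]
  exact ofReal_setIntegral_mul_le one_half_pos w (contDiff_pi.1 (contDiff_comp_ext3 hX ε) i)
    ((hper.comp (· i)).comp_ext3 ε) htrace (mul_ne_zero (by norm_num) hX₀)
    (ENNReal.mul_ne_top (by norm_num) hX_top)

end

/-! ### The first-order estimate -/

section

variable {E : Type*} [NormedAddCommGroup E] [NormedSpace ℝ E] {n : ℕ}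
  {X : (Fin 3 → ℝ) → (Fin 3 → ℝ)}

theorem HOmega3n_ne_top {f : (Fin 3 → ℝ) → E} (hf : ContDiff ℝ n f) : HOmega3n n f ≠ ⊤ := by
  have hsq : HOmega3n n f ^ 2 ≠ ⊤ := by
    rw [HOmega3n_sq]
    refine ENNReal.sum_ne_top.2 fun k hk => ?_
    have hcont : Continuous (iteratedFDeriv ℝ k f) :=
      hf.continuous_iteratedFDeriv (by exact_mod_cast Finset.mem_range_succ_iff.1 hk)
    have hint : IntegrableOn (fun y => ‖iteratedFDeriv ℝ k f y‖ ^ 2) Q3 :=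
      integrableOn_Q3 (hcont.norm.pow 2)
    simpa only [enorm_pow, enorm_norm] using hint.hasFiniteIntegral.ne
  exact fun h => hsq (by rw [h, ENNReal.top_pow two_ne_zero])

theorem ofReal_setIntegral_sq {u : (Fin 3 → ℝ) → ℝ} (hu : Continuous u) :
    ENNReal.ofReal (∫ y in Q3, u y ^ 2) = HOmega3n 0 u ^ 2 := by
  rw [HOmega3n_zero_sq, ofReal_integral_eq_lintegral_ofReal (integrableOn_Q3 (hu.fun_pow 2))
    (ae_of_all _ fun y => sq_nonneg (u y))]
  refine lintegral_congr fun y => ?_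
  rw [← enorm_pow, Real.enorm_of_nonneg (sq_nonneg _)]

theorem ofReal_setIntegral_sum_sq {m : ℕ} {f : (Fin 3 → ℝ) → (Fin m → ℝ)} (hf : Continuous f) :
    ENNReal.ofReal (∫ y in Q3, ∑ k, f y k ^ 2) = ∑ k, HOmega3n 0 (fun y => f y k) ^ 2 := by
  have hfk (k : Fin m) : Continuous fun y => f y k := by fun_prop
  rw [integral_finsetSum _ fun k _ => integrableOn_Q3 ((hfk k).fun_pow 2),
    ENNReal.ofReal_sum_of_nonneg fun k _ => integral_nonneg fun y => sq_nonneg _]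
  exact Finset.sum_congr rfl fun k _ => ofReal_setIntegral_sq (hfk k)

theorem ofReal_setIntegral_sum_sq_le {m : ℕ} {f : (Fin 3 → ℝ) → (Fin m → ℝ)}
    (hf : Continuous f) :
    ENNReal.ofReal (∫ y in Q3, ∑ k, f y k ^ 2) ≤ m * HOmega3n 0 f ^ 2 := by
  rw [ofReal_setIntegral_sum_sq hf]
  calc ∑ k, HOmega3n 0 (fun y => f y k) ^ 2 ≤ ∑ _k : Fin m, HOmega3n 0 f ^ 2 := by
        gcongr with k
        exact HOmega3n_clm_comp_le (norm_proj_le_one k) (contDiff_zero.2 hf)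
    _ = m * HOmega3n 0 f ^ 2 := by simp

theorem enorm_sq_le_sum_enorm_sq {ι : Type*} [Fintype ι] (v : ι → ℝ) :
    ‖v‖ₑ ^ 2 ≤ ∑ k, ‖v k‖ₑ ^ 2 := by
  rw [← ENNReal.rpow_ofNat, ← ENNReal.le_rpow_inv_iff two_pos, ← edist_zero_right]
  refine edist_pi_le_iff.2 fun k => ?_
  rw [Pi.zero_apply, edist_zero_right, ENNReal.le_rpow_inv_iff two_pos, ENNReal.rpow_ofNat]
  exact Finset.single_le_sum (f := fun k => ‖v k‖ₑ ^ 2) (fun _ _ => zero_le) (Finset.mem_univ k)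

theorem HOmega3n_zero_sq_le_ofReal_setIntegral {m : ℕ} {f : (Fin 3 → ℝ) → (Fin m → ℝ)}
    (hf : Continuous f) : HOmega3n 0 f ^ 2 ≤ ENNReal.ofReal (∫ y in Q3, ∑ k, f y k ^ 2) := by
  have hfk (k : Fin m) : Measurable fun y => ‖f y k‖ₑ ^ 2 :=
    (by fun_prop : Continuous _).measurable
  rw [ofReal_setIntegral_sum_sq hf, HOmega3n_zero_sq]
  simp only [HOmega3n_zero_sq]
  rw [← lintegral_finsetSum _ fun k _ => hfk k]
  exact lintegral_mono fun y => enorm_sq_le_sum_enorm_sq (f y)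

theorem HOmega3n_zero_pderiv_sq_le (hX : ContDiff ℝ 1 X) (i : Fin 3) :
    HOmega3n 0 (pderiv i X) ^ 2 ≤
      ENNReal.ofReal (∫ y in Q3, ∑ i, ∑ k, pderiv i X y k ^ 2) := by
  have hcont (i : Fin 3) : Continuous fun y => ∑ k, pderiv i X y k ^ 2 := by
    have := continuous_pderiv hX i
    fun_prop
  refine (HOmega3n_zero_sq_le_ofReal_setIntegral (continuous_pderiv hX i)).trans
    (ENNReal.ofReal_le_ofReal ?_)
  refine integral_mono (integrableOn_Q3 (hcont i))
    (integrableOn_Q3 (continuous_finsetSum _ fun i _ => hcont i)) fun y => ?_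
  exact Finset.single_le_sum (f := fun i => ∑ k, pderiv i X y k ^ 2)
    (fun i _ => Finset.sum_nonneg fun k _ => sq_nonneg _) (Finset.mem_univ i)

theorem HOmega3n_zero_fderiv_sq_le (hX : ContDiff ℝ 1 X) : HOmega3n 0 (fderiv ℝ X) ^ 2 ≤
    9 * ENNReal.ofReal (∫ y in Q3, ∑ i, ∑ k, pderiv i X y k ^ 2) := by
  set r : ℝ≥0∞ := ENNReal.ofReal (∫ y in Q3, ∑ i, ∑ k, pderiv i X y k ^ 2) ^ (2⁻¹ : ℝ)
  have hr : r ^ 2 = ENNReal.ofReal (∫ y in Q3, ∑ i, ∑ k, pderiv i X y k ^ 2) := by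
    rw [← ENNReal.rpow_ofNat, ENNReal.rpow_inv_rpow two_ne_zero]
  have hle (i : Fin 3) : HOmega3n 0 (pderiv i X) ≤ r := by
    rw [← ENNReal.pow_le_pow_left_iff two_ne_zero, hr]
    exact HOmega3n_zero_pderiv_sq_le hX i
  calc HOmega3n 0 (fderiv ℝ X) ^ 2 ≤ (∑ i, HOmega3n 0 (pderiv i X)) ^ 2 := by
        gcongr
        exact HOmega3n_fderiv_le_sum hX
    _ ≤ (∑ _i : Fin 3, r) ^ 2 := by
        gcongr with i
        exact hle i
    _ = 9 * ENNReal.ofReal (∫ y in Q3, ∑ i, ∑ k, pderiv i X y k ^ 2) := by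
        rw [← hr, Fin.sum_const, nsmul_eq_mul, mul_pow]
        norm_num

theorem ofReal_setIntegral_curl3_div3_le (hX : ContDiff ℝ 1 X) :
    ENNReal.ofReal (∫ y in Q3, (∑ k, curl3 X y k ^ 2) + div3 X y ^ 2) ≤
      3 * HOmega3n 0 (curl3 X) ^ 2 + HOmega3n 0 (div3 X) ^ 2 := by
  have hcurl : Continuous (curl3 X) := (contDiff_curl3 (n := 0) hX).continuous
  have hdiv : Continuous (div3 X) := (contDiff_div3 (n := 0) hX).continuous
  rw [integral_add (integrableOn_Q3 (by fun_prop)) (integrableOn_Q3 (hdiv.fun_pow 2))]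
  refine ENNReal.ofReal_add_le.trans (add_le_add ?_ (ofReal_setIntegral_sq hdiv).le)
  exact_mod_cast ofReal_setIntegral_sum_sq_le hcurl

/-- The right-hand side of the div-curl estimate for `‖X‖_{H^{n+1}(Ω)}`: the Sobolev index `n + 1`
avoids the truncated subtraction in `H^{s-1}`. -/
def divCurlNorm (n : ℕ) (X : (Fin 3 → ℝ) → (Fin 3 → ℝ)) : ℝ≥0∞ :=
  HOmega3n 0 X + HOmega3n n (curl3 X) + HOmega3n n (div3 X) +
    normalTangentialNorm ((n : ℝ) - 1 / 2) X

theorem ofReal_boundary_pairing_le (hX : ContDiff ℝ (⊤ : ℕ∞) X) (hper : Per3 X)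
    (hX₀ : HOmega3n 1 X ≠ 0) (hX_top : HOmega3n 1 X ≠ ⊤) :
    ENNReal.ofReal (2 * ∑ l : Fin 2,
      ((∫ x in Q2, X (ext3 x 1) l.castSucc * normalTangentialDeriv X 1 l x) +
        ∫ x in Q2, X (ext3 x (-1)) l.castSucc * normalTangentialDeriv X (-1) l x)) ≤
      34 * (HOmega3n 1 X * normalTangentialNorm (-(1 / 2)) X) := by
  have hface {ε : ℝ} (hε : ε = 1 ∨ ε = -1) (l : Fin 2) :=
    ofReal_setIntegral_trace_mul_le hX hper hX₀ hX_top hε l.castSucc (normalTangentialDeriv X ε l)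
  rw [ENNReal.ofReal_mul zero_le_two, ENNReal.ofReal_ofNat]
  calc 2 * ENNReal.ofReal (∑ l : Fin 2,
        ((∫ x in Q2, X (ext3 x 1) l.castSucc * normalTangentialDeriv X 1 l x) +
          ∫ x in Q2, X (ext3 x (-1)) l.castSucc * normalTangentialDeriv X (-1) l x))
      ≤ 2 * ∑ l : Fin 2, (17 * HOmega3n 1 X * HGammaR (-(1 / 2)) (normalTangentialDeriv X 1 l) +
          17 * HOmega3n 1 X * HGammaR (-(1 / 2)) (normalTangentialDeriv X (-1) l)) := by
        gcongr
        refine (Finset.le_sum_of_subadditive _ ENNReal.ofReal_zero.le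
          (fun _ _ => ENNReal.ofReal_add_le) _ _).trans (Finset.sum_le_sum fun l _ => ?_)
        exact ENNReal.ofReal_add_le.trans (add_le_add (hface (.inl rfl) l) (hface (.inr rfl) l))
    _ = 34 * (HOmega3n 1 X * normalTangentialNorm (-(1 / 2)) X) := by
        simp only [← mul_add, ← Finset.mul_sum]
        rw [← normalTangentialNorm]
        ring

theorem le_mul_of_sq_le_mul {H a K : ℝ≥0∞} (hH : H ≠ ⊤) (h : H ^ 2 ≤ K * (a * H)) : H ≤ K * a := by
  obtain rfl | hH₀ := eq_or_ne H 0
  · exact zero_le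
  · rwa [sq, ← mul_assoc, ENNReal.mul_le_mul_iff_left hH₀ hH] at h

theorem HOmega3n_zero_fderiv_sq_le_of_divCurlNorm_le (hX : ContDiff ℝ (⊤ : ℕ∞) X) (hper : Per3 X)
    (hX₀ : HOmega3n 1 X ≠ 0) (hX_top : HOmega3n 1 X ≠ ⊤) (hle : divCurlNorm 0 X ≤ HOmega3n 1 X) :
    HOmega3n 0 (fderiv ℝ X) ^ 2 ≤ 342 * (divCurlNorm 0 X * HOmega3n 1 X) := by
  have hcurl : HOmega3n 0 (curl3 X) ≤ divCurlNorm 0 X :=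
    le_add_self.trans (le_self_add.trans le_self_add)
  have hdiv : HOmega3n 0 (div3 X) ≤ divCurlNorm 0 X := le_add_self.trans le_self_add
  have hbdry : normalTangentialNorm (-(1 / 2)) X ≤ divCurlNorm 0 X := by
    rw [divCurlNorm, Nat.cast_zero, zero_sub]
    exact le_add_self
  have hsq : divCurlNorm 0 X ^ 2 ≤ divCurlNorm 0 X * HOmega3n 1 X := by
    rw [sq]
    gcongr
  calc HOmega3n 0 (fderiv ℝ X) ^ 2
      ≤ 9 * ENNReal.ofReal (∫ y in Q3, ∑ i, ∑ k, pderiv i X y k ^ 2) :=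
        HOmega3n_zero_fderiv_sq_le (hX.of_le ENat.LEInfty.out)
    _ ≤ 9 * ((3 * HOmega3n 0 (curl3 X) ^ 2 + HOmega3n 0 (div3 X) ^ 2) +
          34 * (HOmega3n 1 X * normalTangentialNorm (-(1 / 2)) X)) := by
        rw [setIntegral_sum_sq_pderiv_eq (hX.of_le ENat.LEInfty.out) hper]
        gcongr
        exact ENNReal.ofReal_add_le.trans
          (add_le_add (ofReal_setIntegral_curl3_div3_le (hX.of_le ENat.LEInfty.out))
            (ofReal_boundary_pairing_le hX hper hX₀ hX_top))
    _ ≤ 9 * ((3 * divCurlNorm 0 X ^ 2 + divCurlNorm 0 X ^ 2) +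
          34 * (HOmega3n 1 X * divCurlNorm 0 X)) := by gcongr
    _ = 36 * divCurlNorm 0 X ^ 2 + 306 * (divCurlNorm 0 X * HOmega3n 1 X) := by ring
    _ ≤ 36 * (divCurlNorm 0 X * HOmega3n 1 X) + 306 * (divCurlNorm 0 X * HOmega3n 1 X) := by gcongr
    _ = 342 * (divCurlNorm 0 X * HOmega3n 1 X) := by ring

theorem HOmega3n_one_le_divCurlNorm (hX : ContDiff ℝ (⊤ : ℕ∞) X) (hper : Per3 X) :
    HOmega3n 1 X ≤ 343 * divCurlNorm 0 X := by
  obtain hlt | hle := lt_or_ge (HOmega3n 1 X) (divCurlNorm 0 X)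
  · exact hlt.le.trans (le_mul_of_one_le_left' (by norm_num))
  obtain hX₀ | hX₀ := eq_or_ne (HOmega3n 1 X) 0
  · exact hX₀.trans_le zero_le
  have hX_top : HOmega3n 1 X ≠ ⊤ := HOmega3n_ne_top (hX.of_le ENat.LEInfty.out)
  refine le_mul_of_sq_le_mul hX_top ?_
  calc HOmega3n 1 X ^ 2 = HOmega3n 0 X ^ 2 + HOmega3n 0 (fderiv ℝ X) ^ 2 := HOmega3n_succ_sq 0 X
    _ ≤ divCurlNorm 0 X * HOmega3n 1 X + 342 * (divCurlNorm 0 X * HOmega3n 1 X) := by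
        gcongr ?_ + ?_
        · rw [sq]
          exact mul_le_mul' (le_self_add.trans (le_self_add.trans le_self_add))
            (HOmega3n_mono zero_le_one X)
        · exact HOmega3n_zero_fderiv_sq_le_of_divCurlNorm_le hX hper hX₀ hX_top hle
    _ = 343 * (divCurlNorm 0 X * HOmega3n 1 X) := by ring

end

/-! ### Higher-order estimates -/

section

variable {X : (Fin 3 → ℝ) → (Fin 3 → ℝ)}

theorem natCast_sub_one_half_nonneg {n : ℕ} (hn : 0 < n) : (0 : ℝ) ≤ n - 1 / 2 := by
  have : (1 : ℝ) ≤ n := by exact_mod_cast hn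
  linarith

theorem divCurlNorm_zero_le (hX : ContDiff ℝ (⊤ : ℕ∞) X) (n : ℕ) :
    divCurlNorm 0 X ≤ divCurlNorm n X := by
  obtain rfl | hn := n.eq_zero_or_pos
  · exact le_rfl
  unfold divCurlNorm
  rw [Nat.cast_zero, zero_sub]
  gcongr
  · exact HOmega3n_mono n.zero_le _
  · exact HOmega3n_mono n.zero_le _
  · exact normalTangentialNorm_neg_le one_half_pos (natCast_sub_one_half_nonneg hn) hX

theorem HOmega3n_zero_pderiv_le (hX : ContDiff ℝ (⊤ : ℕ∞) X) (hper : Per3 X) (n : ℕ) (i : Fin 3) :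
    HOmega3n 0 (pderiv i X) ≤ 343 * divCurlNorm n X :=
  calc HOmega3n 0 (pderiv i X) ≤ HOmega3n 1 X :=
        HOmega3n_pderiv_le (n := 0) (hX.of_le (by exact_mod_cast le_top)) _
    _ ≤ 343 * divCurlNorm 0 X := HOmega3n_one_le_divCurlNorm hX hper
    _ ≤ 343 * divCurlNorm n X := by
        gcongr
        exact divCurlNorm_zero_le hX n

theorem divCurlNorm_pderiv_castSucc_le (hX : ContDiff ℝ (⊤ : ℕ∞) X) (hper : Per3 X) (n : ℕ)
    (j : Fin 2) : divCurlNorm n (pderiv j.castSucc X) ≤ 360 * divCurlNorm (n + 1) X := by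
  have hX₂ : ContDiff ℝ 2 X := hX.of_le ENat.LEInfty.out
  have hXn : ContDiff ℝ ((n + 1 : ℕ) + 1) X := hX.of_le (by exact_mod_cast le_top)
  have hσ : (n : ℝ) - 1 / 2 = -(1 / 2) ∨ 0 ≤ (n : ℝ) - 1 / 2 := by
    obtain rfl | hn := n.eq_zero_or_pos
    · simp
    · exact .inr (natCast_sub_one_half_nonneg hn)
  have hcurl : HOmega3n n (curl3 (pderiv j.castSucc X)) ≤ HOmega3n (n + 1) (curl3 X) := by
    rw [curl3_pderiv hX₂]
    exact HOmega3n_pderiv_le (contDiff_curl3 hXn) _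
  have hdiv : HOmega3n n (div3 (pderiv j.castSucc X)) ≤ HOmega3n (n + 1) (div3 X) := by
    rw [div3_pderiv hX₂]
    exact HOmega3n_pderiv_le (contDiff_div3 hXn) _
  have hbdry := normalTangentialNorm_pderiv_le hσ hX hper j
  rw [sub_add_eq_add_sub, ← Nat.cast_add_one] at hbdry
  calc divCurlNorm n (pderiv j.castSucc X)
      ≤ 343 * divCurlNorm (n + 1) X + HOmega3n (n + 1) (curl3 X) + HOmega3n (n + 1) (div3 X) +
          17 * normalTangentialNorm ((n + 1 : ℕ) - 1 / 2) X :=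
        add_le_add (add_le_add (add_le_add (HOmega3n_zero_pderiv_le hX hper _ _) hcurl) hdiv) hbdry
    _ ≤ 343 * divCurlNorm (n + 1) X + (17 * HOmega3n 0 X + 17 * HOmega3n (n + 1) (curl3 X) +
          17 * HOmega3n (n + 1) (div3 X) + 17 * normalTangentialNorm ((n + 1 : ℕ) - 1 / 2) X) := by
        simp only [← add_assoc]
        gcongr ?_ + ?_ + ?_ + _
        · exact le_self_add
        · exact le_mul_of_one_le_left' (by norm_num)
        · exact le_mul_of_one_le_left' (by norm_num)
    _ = 360 * divCurlNorm (n + 1) X := by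
        rw [← mul_add, ← mul_add, ← mul_add, ← divCurlNorm, ← add_mul]
        norm_num

theorem HOmega3n_succ_succ_le (hX : ContDiff ℝ (⊤ : ℕ∞) X) (n : ℕ) :
    HOmega3n (n + 2) X ≤
      2 * ∑ l : Fin 2, HOmega3n (n + 1) (pderiv l.castSucc X) + divCurlNorm (n + 1) X := by
  have hXn : ContDiff ℝ ((n + 1 : ℕ) + 1) X := hX.of_le (by exact_mod_cast le_top)
  calc HOmega3n (n + 2) X
      ≤ HOmega3n 0 X + ((∑ l : Fin 2, HOmega3n (n + 1) (pderiv l.castSucc X)) +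
          HOmega3n (n + 1) (pderiv 2 X)) :=
        (HOmega3n_succ_le hXn).trans_eq (by rw [Fin.sum_univ_castSucc]; rfl)
    _ ≤ HOmega3n 0 X + ((∑ l : Fin 2, HOmega3n (n + 1) (pderiv l.castSucc X)) +
          (∑ l : Fin 2, HOmega3n (n + 1) (pderiv l.castSucc X) + HOmega3n (n + 1) (curl3 X) +
            HOmega3n (n + 1) (div3 X))) := by
        gcongr
        exact HOmega3n_pderiv_two_le hXn
    _ = 2 * ∑ l : Fin 2, HOmega3n (n + 1) (pderiv l.castSucc X) +
          (HOmega3n 0 X + HOmega3n (n + 1) (curl3 X) + HOmega3n (n + 1) (div3 X)) := by ring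
    _ ≤ 2 * ∑ l : Fin 2, HOmega3n (n + 1) (pderiv l.castSucc X) + divCurlNorm (n + 1) X := by
        gcongr
        exact le_self_add

theorem exists_HOmega3n_succ_le_mul_divCurlNorm (n : ℕ) :
    ∃ C : ℝ≥0, 0 < C ∧ ∀ X : (Fin 3 → ℝ) → (Fin 3 → ℝ), ContDiff ℝ (⊤ : ℕ∞) X → Per3 X →
      HOmega3n (n + 1) X ≤ C * divCurlNorm n X := by
  induction n with
  | zero => exact ⟨343, by norm_num, fun X hX hper => HOmega3n_one_le_divCurlNorm hX hper⟩
  | succ n ih =>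
    obtain ⟨C, -, hC⟩ := ih
    refine ⟨1440 * C + 1, by positivity, fun X hX hper => ?_⟩
    have hhorizontal (l : Fin 2) :
        HOmega3n (n + 1) (pderiv l.castSucc X) ≤ C * (360 * divCurlNorm (n + 1) X) :=
      (hC _ (contDiff_pderiv hX le_rfl _) (per3_pderiv hper _)).trans
        (mul_le_mul_right (divCurlNorm_pderiv_castSucc_le hX hper n l) _)
    calc HOmega3n (n + 2) X
        ≤ 2 * ∑ l : Fin 2, HOmega3n (n + 1) (pderiv l.castSucc X) + divCurlNorm (n + 1) X :=
          HOmega3n_succ_succ_le hX n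
      _ ≤ 2 * ∑ _l : Fin 2, C * (360 * divCurlNorm (n + 1) X) + divCurlNorm (n + 1) X := by
          gcongr with l
          exact hhorizontal l
      _ = (1440 * C + 1 : ℝ≥0) * divCurlNorm (n + 1) X := by
          push_cast
          rw [Fin.sum_const]
          ring

end

end

/-- **Hodge-type div–curl estimate.** On `Ω = 𝕋² × (−1,1)` with boundary `Γ` and outward
normal `N`, for every integer `s ≥ 1` and every smooth vector field `X`:
`‖X‖_{H^s(Ω)} ≲ ‖X‖_{L²} + ‖curl X‖_{H^{s−1}} + ‖div X‖_{H^{s−1}} + |∂̄X·N|_{H^{s−3/2}(Γ)}`,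
the boundary term collecting the two tangential derivatives `∂̄ ∈ {∂_1, ∂_2}` on the top
(`N = e₃`) and bottom (`N = −e₃`) components of `Γ`. -/
theorem hodge_div_curl_estimate :
    ∀ s : ℕ, 1 ≤ s →
      ∃ C : ℝ≥0, 0 < C ∧
        ∀ X : (Fin 3 → ℝ) → (Fin 3 → ℝ), ContDiff ℝ (⊤ : ℕ∞) X → Per3 X →
          HOmega3n s X ≤
            C * (HOmega3n 0 X + HOmega3n (s - 1) (curl3 X) + HOmega3n (s - 1) (div3 X) +
              ∑ l : Fin 2,
                (HGammaR ((s : ℝ) - 3/2)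
                    (fun x => fderiv ℝ X (ext3 x 1) (Pi.single l.castSucc 1) 2) +
                  HGammaR ((s : ℝ) - 3/2)
                    (fun x => -fderiv ℝ X (ext3 x (-1)) (Pi.single l.castSucc 1) 2))) := by
  intro s hs
  obtain ⟨n, rfl⟩ := Nat.exists_eq_add_of_le' hs
  obtain ⟨C, hC₀, hC⟩ := exists_HOmega3n_succ_le_mul_divCurlNorm n
  refine ⟨C, hC₀, fun X hX hper => ?_⟩
  have hσ : ((n + 1 : ℕ) : ℝ) - 3 / 2 = n - 1 / 2 := by
    push_cast
    ring
  have h := hC X hX hper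
  unfold divCurlNorm normalTangentialNorm normalTangentialDeriv at h
  simpa only [one_mul, neg_one_mul, Nat.add_sub_cancel, hσ] using h
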